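/- For every δ ∈ (0,1) and every integer k ≥ 3, there exists a constant C such that the following holds. If (p_n) is a sequence in [0,1] with p_n ≥ C·n^{−1/(k−1)} for all sufficiently large n, then the probability that the p_n-random subset [n]_{p_n} of {1,…,n} is (δ,k)-Szemerédi tends to 1 as n → ∞. -/

import Mathlib

attribute [local instance] Classical.propDecidable

/-- `A` is `(δ,k)`-Szemerédi: every subset `B ⊆ A` with `|B| ≥ δ|A|` contains a
`k`-term arithmetic progression. -/
def IsSzemeredi (δ : ℝ) (k : ℕ) (A : Finset ℕ) : Prop :=
  ∀ B ⊆ A, δ * (A.card : ℝ) ≤ (B.card : ℝ) →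
    ∃ a d : ℕ, 0 < a ∧ 0 < d ∧ ∀ i < k, a + i * d ∈ B

/-- The probability that the `p`-random subset of `{1, …, n}` satisfies `P`. -/
noncomputable def randomSubsetProb (n : ℕ) (p : ℝ) (P : Finset ℕ → Prop) : ℝ :=
  ∑ S ∈ (Finset.Icc 1 n).powerset,
    if P S then p ^ S.card * (1 - p) ^ (n - S.card) else 0

/-!
The density Hales–Jewett theorem over `Option α` is deduced from the one over `α`. Consider a
line-free set in a high dimension whose density is close to the infimum `d` of the densities forced
by line-freeness. The theorem over `α`, with the Hales–Jewett theorem, provides a subspace of words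
with wildcards over which the tails common to all substitutions of a letter of `α` have density at
least `θ > 0`. These tails are excluded by line-freeness, and outside them the density is still at
most about `d`, because their complement is nearly partitioned into large subspaces. So the density
is at most about `d * (1 - θ)`, a contradiction unless `d = 0`.

Averaging the resulting theorem over maps `x ↦ a + d * ∑ i, x i` produces a positive proportion of
all progressions in each dense set of integers. The hypergraph of progressions in a dense set then
satisfies the hypotheses of the container theorem, so a progression-free subset of `{1, …, n}` lies
in one of few containers of size at most `δ n / 8`, determined by fingerprints with
`O(n ^ (1 - 1 / (k - 1)))` elements. If the random set is not Szemerédi, then it is too small, or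
it contains a fingerprint and unusually many elements of the corresponding container. The
probabilities of these events are bounded by exponential moments, and their sum tends to zero.
-/

namespace SparseSzemeredi

open Combinatorics
open scoped BigOperators

universe u

/-! ### Averages and densities -/

section Density

lemma indicator_one_nonneg {X : Type*} (A : Set X) (x : X) : (0 : ℝ) ≤ A.indicator 1 x :=
  Set.indicator_nonneg (fun _ _ => zero_le_one) x

lemma indicator_one_le_one {X : Type*} (A : Set X) (x : X) : A.indicator 1 x ≤ (1 : ℝ) :=
  Set.indicator_le_self' (fun _ _ => zero_le_one) x

/-- The density of a subset of a finite type with respect to the uniform measure; it is `0` if the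
type is empty or infinite. -/
noncomputable def density {X : Type*} (A : Set X) : ℝ := A.ncard / Nat.card X

lemma density_nonneg {X : Type*} (A : Set X) : 0 ≤ density A := by
  unfold density
  positivity

lemma density_le_one {X : Type*} [Finite X] (A : Set X) : density A ≤ 1 := by
  refine div_le_one_of_le₀ ?_ (Nat.cast_nonneg _)
  exact_mod_cast Set.ncard_le_card A

lemma nonempty_of_density_pos {X : Type*} {A : Set X} (hA : 0 < density A) : A.Nonempty := by
  rw [Set.nonempty_iff_ne_empty]
  rintro rfl
  simp [density] at hA

lemma density_preimage_equiv {X Y : Type*} (e : X ≃ Y) (A : Set Y) :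
    density (e ⁻¹' A) = density A := by
  rw [density, density, Nat.card_congr e,
    Set.ncard_preimage_of_injective_subset_range e.injective (by simp)]

variable {X Y W : Type*} [Fintype X] [Fintype Y] [Fintype W]

lemma density_eq_expect (A : Set X) : density A = 𝔼 x, A.indicator 1 x := by
  rw [density, Fintype.expect_eq_sum_div_card, Nat.card_eq_fintype_card,
    Set.ncard_eq_toFinset_card', Set.toFinset_card]
  simp [Set.indicator_apply, Fintype.card_subtype]

lemma expect_density_comm (R : X → Set Y) :
    𝔼 x, density (R x) = 𝔼 y, density {x | y ∈ R x} := by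
  simp only [density_eq_expect]
  exact Finset.expect_comm _ _ _

lemma expect_indicator_range_mul {f : X → Y} (hf : Function.Injective f) (φ : Y → ℝ) :
    𝔼 y, (Set.range f).indicator 1 y * φ y =
      Fintype.card X / Fintype.card Y * 𝔼 x, φ (f x) := by
  have hsum : ∑ y, (Set.range f).indicator 1 y * φ y = ∑ x, φ (f x) := by
    rw [← Finset.sum_image (f := φ) hf.injOn, ← Finset.sum_subset (Finset.subset_univ _)]
    · refine Finset.sum_congr rfl fun y hy => ?_
      rw [Set.indicator_of_mem (by simpa using hy), Pi.one_apply, one_mul]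
    · intro y _ hy
      rw [Set.indicator_of_notMem (by simpa using hy), zero_mul]
  rw [Fintype.expect_eq_sum_div_card, Fintype.expect_eq_sum_div_card, hsum]
  rcases isEmpty_or_nonempty X with _ | _
  · simp
  · field_simp

lemma le_apply_of_le_expect {g : X → ℝ} {d γ : ℝ} (hγ : 0 ≤ γ) (hmean : d - γ ≤ 𝔼 x, g x)
    (hle : ∀ x, g x ≤ d + γ) (x : X) : d - 2 * Fintype.card X * γ ≤ g x := by
  have hcard : (0 : ℝ) < Fintype.card X := by exact_mod_cast Fintype.card_pos_iff.2 ⟨x⟩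
  rw [Fintype.expect_eq_sum_div_card, le_div_iff₀ hcard] at hmean
  have hrest : ∑ y ∈ Finset.univ.erase x, g y ≤ (Fintype.card X - 1) * (d + γ) := by
    have := Finset.sum_le_card_nsmul (Finset.univ.erase x) g (d + γ) fun y _ => hle y
    rwa [Finset.card_erase_of_mem (Finset.mem_univ x), nsmul_eq_mul, Finset.card_univ,
      Nat.cast_pred (by exact_mod_cast hcard)] at this
  have hsplit := Finset.add_sum_erase Finset.univ g (Finset.mem_univ x)
  nlinarith

lemma exists_le_density_of_witness {Y : Type*} [Finite Y] {R : X → Set Y} {P : W → Set Y}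
    {ε : ℝ} (hε : 0 < ε) (hwitness : ∀ y, ε / 2 ≤ density {x | y ∈ R x} → ∃ w, y ∈ P w)
    (hR : ε ≤ 𝔼 x, density (R x)) : ∃ w, ε / 2 / (Fintype.card W + 1) ≤ density (P w) := by
  have := Fintype.ofFinite Y
  by_contra! hsparse
  have hpoint : ∀ y, density {x | y ∈ R x} ≤ ε / 2 + ∑ w, (P w).indicator 1 y := by
    intro y
    have hnonneg : ∀ w ∈ Finset.univ, (0 : ℝ) ≤ (P w).indicator 1 y :=
      fun w _ => indicator_one_nonneg (P w) y
    by_cases hy : ε / 2 ≤ density {x | y ∈ R x}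
    · obtain ⟨w, hw⟩ := hwitness y hy
      have hone := Finset.single_le_sum hnonneg (Finset.mem_univ w)
      rw [Set.indicator_of_mem hw, Pi.one_apply] at hone
      linarith [density_le_one {x | y ∈ R x}]
    · linarith [Finset.sum_nonneg hnonneg]
  have hnonempty : Nonempty Y := by
    by_contra hY
    rw [not_nonempty_iff] at hY
    simp only [density_eq_expect, Finset.univ_eq_empty, Finset.expect_empty,
      Finset.expect_const_zero] at hR
    exact hε.not_ge hR
  have hsum : ∑ w, density (P w) ≤ Fintype.card W * (ε / 2 / (Fintype.card W + 1)) := by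
    simpa using Finset.sum_le_card_nsmul Finset.univ _ _ fun w _ => (hsparse w).le
  have hhalf : Fintype.card W * (ε / 2 / (Fintype.card W + 1)) < ε / 2 := by
    rw [mul_div_assoc', div_lt_iff₀ (by positivity)]
    nlinarith
  have hmean : 𝔼 x, density (R x) ≤ ε / 2 + ∑ w, density (P w) := calc
    𝔼 x, density (R x) = 𝔼 y, density {x | y ∈ R x} := expect_density_comm R
    _ ≤ 𝔼 y, (ε / 2 + ∑ w, (P w).indicator 1 y) := Finset.expect_le_expect fun y _ => hpoint y
    _ = ε / 2 + ∑ w, density (P w) := by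
      simp only [Finset.expect_add_distrib, Fintype.expect_const, Finset.expect_sum_comm,
        density_eq_expect]
  linarith

variable {ι κ α : Type*}

lemma expect_sumElim [Fintype (ι → α)] [Fintype (κ → α)] {_ : Fintype (ι ⊕ κ → α)}
    (f : (ι ⊕ κ → α) → ℝ) :
    𝔼 x, f x = 𝔼 u : ι → α, 𝔼 v : κ → α, f (Sum.elim u v) := by
  rw [← Finset.expect_product', Finset.univ_product_univ]
  exact Fintype.expect_equiv (Equiv.sumArrowEquivProdArrow ι κ α) _ _
    fun x => congrArg f (Sum.elim_comp_inl_inr x).symm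

lemma density_eq_expect_left [Fintype (ι → α)] [Finite (κ → α)] (A : Set (ι ⊕ κ → α)) :
    density A = 𝔼 u : ι → α, density {v : κ → α | Sum.elim u v ∈ A} := by
  have := Fintype.ofFinite (κ → α)
  let : Fintype (ι ⊕ κ → α) := Fintype.ofEquiv _ (Equiv.sumArrowEquivProdArrow ι κ α).symm
  simp only [density_eq_expect]
  exact expect_sumElim _

lemma density_eq_expect_right [Finite (ι → α)] [Fintype (κ → α)] (A : Set (ι ⊕ κ → α)) :
    density A = 𝔼 v : κ → α, density {u : ι → α | Sum.elim u v ∈ A} := by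
  have := Fintype.ofFinite (ι → α)
  rw [density_eq_expect_left, expect_density_comm]
  rfl

end Density

/-! ### Combinatorial subspaces -/

section Subspaces

variable {α η ζ ι κ : Type*}

/-- The subspace `U ∘ V` of a subspace `U`. -/
def subspaceComp (U : Subspace η α ι) (V : Subspace ζ α η) : Subspace ζ α ι where
  idxFun i := (U.idxFun i).elim Sum.inl V.idxFun
  proper e := by
    obtain ⟨j, hj⟩ := V.proper e
    obtain ⟨i, hi⟩ := U.proper j
    exact ⟨i, by simp [hi, hj]⟩

lemma subspaceComp_apply (U : Subspace η α ι) (V : Subspace ζ α η) (x : ζ → α) :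
    subspaceComp U V x = U (V x) := by
  funext i
  rcases h : U.idxFun i with _ | _ <;> simp [Subspace.apply_def, subspaceComp, h]

/-- The product of a subspace of `ι → α` with a point of `κ → α`. -/
def subspaceProdPoint (U : Subspace η α ι) (y : κ → α) : Subspace η α (ι ⊕ κ) where
  idxFun := Sum.elim U.idxFun fun j => Sum.inl (y j)
  proper e := (U.proper e).imp' Sum.inl fun _ hi => hi

lemma subspaceProdPoint_apply (U : Subspace η α ι) (y : κ → α) (x : η → α) :
    subspaceProdPoint U y x = Sum.elim (U x) y := by
  funext i
  rcases i with i | i <;> rfl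

/-- The product of a point of `ι → α` with a subspace of `κ → α`. -/
def pointProdSubspace (y : ι → α) (U : Subspace η α κ) : Subspace η α (ι ⊕ κ) where
  idxFun := Sum.elim (fun j => Sum.inl (y j)) U.idxFun
  proper e := (U.proper e).imp' Sum.inr fun _ hi => hi

lemma pointProdSubspace_apply (y : ι → α) (U : Subspace η α κ) (x : η → α) :
    pointProdSubspace y U x = Sum.elim y (U x) := by
  funext i
  rcases i with i | i <;> rfl

/-- The whole space `ι → α` as a subspace of itself. -/
def fullSubspace (ι α : Type*) : Subspace ι α ι := ⟨Sum.inr, fun i => ⟨i, rfl⟩⟩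

lemma fullSubspace_apply (x : ι → α) : fullSubspace ι α x = x := rfl

/-- The product of a line and a subspace, with the variable of the line as the coordinate `none`. -/
def lineProdSubspace (l : Line α ι) (U : Subspace η α κ) : Subspace (Option η) α (ι ⊕ κ) where
  idxFun := Sum.elim (fun i => (l.idxFun i).elim (Sum.inr none) Sum.inl)
    fun j => (U.idxFun j).map id some
  proper
    | none => l.proper.imp' Sum.inl fun _ hi => by simp [hi]
    | some e => (U.proper e).imp' Sum.inr fun _ hi => by simp [hi]

lemma lineProdSubspace_apply (l : Line α ι) (U : Subspace η α κ) (x : Option η → α) :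
    lineProdSubspace l U x = Sum.elim (l (x none)) (U (x ∘ some)) := by
  funext i
  rcases i with i | j
  · rcases h : l.idxFun i with _ | _ <;> simp [Subspace.apply_def, lineProdSubspace, h]
  · rcases h : U.idxFun j with _ | _ <;> simp [Subspace.apply_def, lineProdSubspace, h]

lemma subspace_injective (U : Subspace η α ι) : Function.Injective fun x => U x := by
  intro x y hxy
  funext e
  obtain ⟨i, hi⟩ := U.proper e
  simpa only [Subspace.apply_inr hi] using congrFun hxy i

noncomputable instance [Fintype η] [Fintype α] [Fintype ι] : Fintype (Subspace η α ι) :=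
  Fintype.ofInjective Subspace.idxFun fun _ _ h => Subspace.ext h

noncomputable instance [Fintype α] [Fintype ι] : Fintype (Line α ι) :=
  Fintype.ofInjective Line.idxFun fun l m h => by cases l; cases m; congr

/-- A set of words is line-free if it contains no combinatorial line. -/
def IsLineFree (A : Set (ι → α)) : Prop := ¬ ∃ l : Line α ι, ∀ a, l a ∈ A

lemma IsLineFree.preimage {A : Set (ι → α)} (hA : IsLineFree A) (U : Subspace η α ι) :
    IsLineFree {x | U x ∈ A} := by
  rintro ⟨l, hl⟩
  refine hA ⟨⟨fun i => (U.idxFun i).elim some l.idxFun, ?_⟩, fun a => ?_⟩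
  · obtain ⟨j, hj⟩ := l.proper
    obtain ⟨i, hi⟩ := U.proper j
    exact ⟨i, by simp [hi, hj]⟩
  · have hla : U (l a) ∈ A := hl a
    convert! hla using 1
    funext i
    rcases h : U.idxFun i with _ | _ <;> simp [Subspace.apply_def, h]

lemma IsLineFree.fiber_left {A : Set (ι ⊕ κ → α)} (hA : IsLineFree A) (y : κ → α) :
    IsLineFree {x : ι → α | Sum.elim x y ∈ A} := by
  simpa only [subspaceProdPoint_apply, fullSubspace_apply] using
    hA.preimage (subspaceProdPoint (fullSubspace ι α) y)

lemma IsLineFree.fiber_right {A : Set (ι ⊕ κ → α)} (hA : IsLineFree A) (x : ι → α) :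
    IsLineFree {y : κ → α | Sum.elim x y ∈ A} := by
  simpa only [pointProdSubspace_apply, fullSubspace_apply] using
    hA.preimage (pointProdSubspace x (fullSubspace κ α))

end Subspaces

section DensityHalesJewett

variable {α : Type u}

/-- The density Hales-Jewett property of an alphabet: in some finite dimension, line-free sets of
words have density less than `ε`. -/
def HasDensityHalesJewett (α : Type*) : Prop :=
  ∀ ε : ℝ, 0 < ε → ∃ (ι : Type) (_ : Fintype ι),
    ∀ A : Set (ι → α), IsLineFree A → density A < ε

lemma HasDensityHalesJewett.exists_line_le_density [Fintype α] (h : HasDensityHalesJewett α)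
    {ε : ℝ} (hε : 0 < ε) : ∃ (ι : Type) (_ : Fintype ι) (θ : ℝ), 0 < θ ∧
      ∀ (Ω : Type u) [Fintype Ω] (D : (ι → α) → Set Ω), ε ≤ 𝔼 t, density (D t) →
        ∃ l : Line α ι, θ ≤ density {ω | ∀ a, ω ∈ D (l a)} := by
  obtain ⟨ι, _, hι⟩ := h (ε / 2) (half_pos hε)
  refine ⟨ι, inferInstance, ε / 2 / (Fintype.card (Line α ι) + 1), by positivity,
    fun Ω _ D hD => exists_le_density_of_witness hε (fun ω hω => ?_) hD⟩
  by_contra hfree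
  exact (hι {t | ω ∈ D t} hfree).not_ge hω

lemma HasDensityHalesJewett.exists_dim_subspace [Finite α] (h : HasDensityHalesJewett α)
    (η : Type) [Finite η] : ∀ ε : ℝ, 0 < ε → ∃ (κ : Type) (_ : Fintype κ), ∀ A : Set (κ → α),
      ε ≤ density A → ∃ U : Subspace η α κ, ∀ x, U x ∈ A := by
  have := Fintype.ofFinite α
  induction η using Finite.induction_empty_option with
  | of_equiv e ih =>
    intro ε hε
    obtain ⟨κ, _, hκ⟩ := ih ε hε
    refine ⟨κ, inferInstance, fun A hA => ?_⟩
    obtain ⟨U, hU⟩ := hκ A hA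
    refine ⟨U.reindex e (Equiv.refl _) (Equiv.refl _), fun x => ?_⟩
    convert! hU (x ∘ e) using 1
    funext i
    simp
  | h_empty =>
    intro ε hε
    refine ⟨Empty, inferInstance, fun A hA => ?_⟩
    obtain ⟨x, hx⟩ := nonempty_of_density_pos (hε.trans_le hA)
    exact ⟨⟨Empty.elim, PEmpty.rec⟩, fun y => by convert hx⟩
  | h_option ih =>
    intro ε hε
    obtain ⟨ι, _, θ, hθ, hline⟩ := h.exists_line_le_density hε
    obtain ⟨κ, _, hκ⟩ := ih θ hθ
    refine ⟨ι ⊕ κ, inferInstance, fun A hA => ?_⟩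
    rw [density_eq_expect_left] at hA
    obtain ⟨l, hl⟩ := hline (κ → α) (fun t => {y | Sum.elim t y ∈ A}) hA
    obtain ⟨U, hU⟩ := hκ _ hl
    refine ⟨lineProdSubspace l U, fun x => ?_⟩
    rw [lineProdSubspace_apply]
    exact hU (x ∘ some) (x none)

lemma HasDensityHalesJewett.exists_subspace [Finite α] [Nonempty α] (h : HasDensityHalesJewett α)
    (η : Type) [Finite η] {ε : ℝ} (hε : 0 < ε) :
    ∃ N : ℕ, ∀ (ι : Type) [Fintype ι], N ≤ Fintype.card ι →
      ∀ A : Set (ι → α), ε ≤ density A → ∃ U : Subspace η α ι, ∀ x, U x ∈ A := by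
  have := Fintype.ofFinite α
  obtain ⟨κ, _, hκ⟩ := h.exists_dim_subspace η ε hε
  refine ⟨Fintype.card κ, fun ι _ hι A hA => ?_⟩
  obtain ⟨f⟩ := Function.Embedding.nonempty_of_card_le hι
  let e : κ ⊕ ↥(Set.range f)ᶜ ≃ ι :=
    (Equiv.sumCongr (Equiv.ofInjective f f.injective) (Equiv.refl _)).trans
      (Equiv.Set.sumCompl (Set.range f))
  rw [← density_preimage_equiv (Equiv.arrowCongr e (Equiv.refl α)), density_eq_expect_right] at hA
  obtain ⟨v, -, hv⟩ := Finset.exists_le_of_le_expect Finset.univ_nonempty hA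
  obtain ⟨U, hU⟩ := hκ _ hv
  refine ⟨(subspaceProdPoint U v).reindex (Equiv.refl _) (Equiv.refl _) e, fun x => ?_⟩
  have hx : Equiv.arrowCongr e (Equiv.refl α) (Sum.elim (U x) v) ∈ A := hU x
  convert! hx using 1
  funext i
  simp [subspaceProdPoint_apply]

end DensityHalesJewett

/-! ### Words with wildcards -/

section LetterSubst

variable {α : Type u} {ι κ η B : Type*}

/-- The word obtained from a word over `Option α` by writing the letter `a` for each `none`. -/
def letterSubst (a : α) (x : ι → Option α) : ι → α := fun i => (x i).getD a

lemma letterSubst_sumElim (a : α) (u : ι → Option α) (z : κ → Option α) :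
    letterSubst a (Sum.elim u z) = Sum.elim (letterSubst a u) (letterSubst a z) := by
  funext i
  rcases i with i | i <;> rfl

lemma letterSubst_subspace (a : α) (U : Subspace η (Option α) ι) (x : η → Option α) :
    letterSubst a (U x) = letterSubst a (U fun i => some (letterSubst a x i)) := by
  funext i
  rcases h : U.idxFun i with _ | _ <;> simp [letterSubst, Subspace.apply_def, h]

/-- The word over `Option α` that agrees with `y` on `S` and is `none` elsewhere. -/
noncomputable def extendByNone (S : Set B) (y : S → α) : B → Option α :=
  fun i => if h : i ∈ S then some (y ⟨i, h⟩) else none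

lemma isSome_extendByNone {S : Set B} {y : S → α} {i : B} :
    (extendByNone S y i).isSome ↔ i ∈ S := by
  by_cases h : i ∈ S <;> simp [extendByNone, h]

lemma extendByNone_bijective :
    Function.Bijective fun q : Σ S : Set B, (S → α) => extendByNone q.1 q.2 := by
  constructor
  · rintro ⟨S, y⟩ ⟨S', y'⟩ h
    obtain rfl : S = S' := by
      ext i
      rw [← isSome_extendByNone (y := y), ← isSome_extendByNone (y := y')]
      exact congrArg (fun b => b.isSome = true) (congrFun h i) |>.to_iff
    congr
    funext i
    simpa [extendByNone] using congrFun h i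
  · intro x
    refine ⟨⟨{i | (x i).isSome}, fun i => (x i.1).get i.2⟩, funext fun i => ?_⟩
    cases h : x i <;> simp [extendByNone, h]

/-- The subspace over `Option α` that agrees with `U` on `S` and is `none` elsewhere. -/
noncomputable def extendSubspaceByNone (S : Set B) (U : Subspace η α S) :
    Subspace η (Option α) B where
  idxFun i := if h : i ∈ S then (U.idxFun ⟨i, h⟩).map some id else Sum.inl none
  proper e := by
    obtain ⟨i, hi⟩ := U.proper e
    exact ⟨i, by simp [hi]⟩

lemma letterSubst_extendSubspaceByNone (a : α) (S : Set B) (U : Subspace η α S)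
    (x : η → Option α) :
    letterSubst a (extendSubspaceByNone S U x) =
      letterSubst a (extendByNone S (U (letterSubst a x))) := by
  funext i
  by_cases hi : i ∈ S
  · rcases h : U.idxFun ⟨i, hi⟩ with _ | _ <;>
      simp [letterSubst, Subspace.apply_def, extendSubspaceByNone, extendByNone, hi, h]
  · simp [letterSubst, Subspace.apply_def, extendSubspaceByNone, extendByNone, hi]

end LetterSubst

section RandomSupport

variable {α : Type u} {B : Type*}

lemma density_le_of_extendByNone [Finite α] [Finite B] {A : Set (B → Option α)} {θ : ℝ} {N : ℕ}
    (h : ∀ S : Set B, N ≤ S.ncard → density {y : S → α | extendByNone S y ∈ A} ≤ θ)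
    (hθ : 0 ≤ θ) :
    density A ≤ θ + density {x : B → Option α | {i | (x i).isSome}.ncard < N} := by
  have := Fintype.ofFinite α
  have := Fintype.ofFinite B
  set small : Set (B → Option α) := {x | {i | (x i).isSome}.ncard < N} with hsmall
  suffices hsum : ∑ x, A.indicator 1 x ≤ ∑ x, (θ + small.indicator 1 x) by
    calc
      density A ≤ 𝔼 x, (θ + small.indicator 1 x) := by
        rw [density_eq_expect, Fintype.expect_eq_sum_div_card, Fintype.expect_eq_sum_div_card]
        exact div_le_div_of_nonneg_right hsum (Nat.cast_nonneg _)
      _ = θ + density small := by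
        rw [Finset.expect_add_distrib, Fintype.expect_const, density_eq_expect]
  rw [← extendByNone_bijective.sum_comp, ← extendByNone_bijective.sum_comp, Fintype.sum_sigma,
    Fintype.sum_sigma]
  refine Finset.sum_le_sum fun S _ => ?_
  by_cases hS : N ≤ S.ncard
  · calc
      ∑ y : S → α, A.indicator 1 (extendByNone S y)
      _ = Fintype.card (S → α) • density {y : S → α | extendByNone S y ∈ A} := by
        rw [density_eq_expect]
        exact (Finset.card_smul_expect Finset.univ _).symm
      _ ≤ Fintype.card (S → α) • θ := nsmul_le_nsmul_right (h S hS) _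
      _ = ∑ _y : S → α, θ := by rw [Finset.sum_const, Finset.card_univ]
      _ ≤ ∑ y : S → α, (θ + small.indicator 1 (extendByNone S y)) :=
        Finset.sum_le_sum fun y _ => le_add_of_nonneg_right (indicator_one_nonneg _ _)
  · refine Finset.sum_le_sum fun y _ => ?_
    have hmem : extendByNone S y ∈ small := by
      simpa only [hsmall, Set.mem_ofPred_eq, isSome_extendByNone, Set.ofPred_mem_eq] using
        not_le.1 hS
    rw [Set.indicator_of_mem hmem]
    exact (indicator_one_le_one A _).trans (le_add_of_nonneg_left hθ)

lemma sum_prod_isSome_half [Fintype α] [Fintype B] :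
    ∑ x : B → Option α, ∏ i, (if (x i).isSome then 1 / 2 else 1 : ℝ) =
      (1 + Fintype.card α / 2) ^ Fintype.card B := by
  rw [← Fintype.piFinset_univ, ← Finset.prod_univ_sum _
    fun _ (b : Option α) => (if b.isSome then 1 / 2 else 1 : ℝ)]
  simp [Fintype.sum_option, div_eq_mul_inv]

lemma density_ncard_isSome_lt_le [Fintype α] [Fintype B] (N : ℕ) :
    density {x : B → Option α | {i | (x i).isSome}.ncard < N} ≤
      2 ^ N * ((1 + Fintype.card α / 2) / (1 + Fintype.card α)) ^ Fintype.card B := by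
  -- Markov's inequality for `2 ^ (-|support|)`.
  have hpoint : ∀ x : B → Option α,
      ({x : B → Option α | {i | (x i).isSome}.ncard < N}.indicator 1 x : ℝ) ≤
        2 ^ N * ∏ i, (if (x i).isSome then 1 / 2 else 1) := by
    intro x
    have hprod : ∏ i, (if (x i).isSome then 1 / 2 else 1 : ℝ) =
        (1 / 2) ^ {i | (x i).isSome}.ncard := by
      rw [Finset.prod_ite, Finset.prod_const, Finset.prod_const_one, mul_one,
        Set.ncard_eq_toFinset_card', Set.toFinset_ofPred]
    rw [hprod, one_div, inv_pow, ← div_eq_mul_inv]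
    refine Set.indicator_apply_le' (fun hx => ?_) fun _ => by positivity
    rw [Pi.one_apply, one_le_div (by positivity)]
    exact pow_le_pow_right₀ one_le_two (le_of_lt hx)
  rw [density_eq_expect]
  refine (Finset.expect_le_expect fun x _ => hpoint x).trans_eq ?_
  rw [← Finset.mul_expect, Fintype.expect_eq_sum_div_card, sum_prod_isSome_half, div_pow]
  simp [add_comm]

lemma exists_density_ncard_isSome_lt [Finite α] [Nonempty α] (N : ℕ) {ε : ℝ} (hε : 0 < ε) :
    ∃ (B : Type) (_ : Fintype B),
      density {x : B → Option α | {i | (x i).isSome}.ncard < N} < ε := by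
  have := Fintype.ofFinite α
  have hα : 0 < (Fintype.card α : ℝ) := Nat.cast_pos.2 Fintype.card_pos
  have hratio : (1 + Fintype.card α / 2) / (1 + Fintype.card α : ℝ) < 1 := by
    rw [div_lt_one (by positivity)]
    linarith
  obtain ⟨M, hM⟩ := exists_pow_lt_of_lt_one (show 0 < ε / 2 ^ N by positivity) hratio
  refine ⟨Fin M, inferInstance, (density_ncard_isSome_lt_le N).trans_lt ?_⟩
  rwa [Fintype.card_fin, mul_comm, ← lt_div_iff₀ (by positivity)]

lemma HasDensityHalesJewett.exists_subspace_letterSubst [Finite α] [Nonempty α]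
    (h : HasDensityHalesJewett α) (a : α) (η : Type) [Finite η] {ε : ℝ} (hε : 0 < ε) :
    ∃ (B : Type) (_ : Fintype B), ∀ E : Set (B → α),
      ε ≤ density {x : B → Option α | letterSubst a x ∈ E} →
        ∃ U : Subspace η (Option α) B, ∀ x, letterSubst a (U x) ∈ E := by
  obtain ⟨N, hN⟩ := h.exists_subspace η (half_pos hε)
  obtain ⟨B, _, hB⟩ := exists_density_ncard_isSome_lt (α := α) N (half_pos hε)
  refine ⟨B, inferInstance, fun E hE => ?_⟩
  by_contra! hU
  suffices hsparse : ∀ S : Set B, N ≤ S.ncard →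
      density {y : S → α | letterSubst a (extendByNone S y) ∈ E} ≤ ε / 2 by
    have hle := density_le_of_extendByNone (A := {x | letterSubst a x ∈ E}) hsparse (half_pos hε).le
    linarith
  intro S hS
  by_contra! hdense
  have hS' : N ≤ Fintype.card S := by rwa [← Nat.card_eq_fintype_card, Nat.card_coe_set_eq]
  obtain ⟨U, hUE⟩ := hN S hS' {y | letterSubst a (extendByNone S y) ∈ E} hdense.le
  obtain ⟨x, hx⟩ := hU (extendSubspaceByNone S U)
  rw [letterSubst_extendSubspaceByNone] at hx
  exact hx (hUE _)

end RandomSupport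

/-! ### Functions with small mean on subspaces -/

section SmallMeans

variable {β : Type u} {η ζ ι κ : Type*} [Fintype β] [Fintype η]

/-- The function `g` has mean at most `ε` on each `η`-dimensional combinatorial subspace. -/
def MeanOnSubspacesLE (η : Type*) [Fintype η] (g : (ι → β) → ℝ) (ε : ℝ) : Prop :=
  ∀ U : Subspace η β ι, 𝔼 x, g (U x) ≤ ε

variable {g : (ι → β) → ℝ} {ε : ℝ}

lemma MeanOnSubspacesLE.comp (hg : MeanOnSubspacesLE η g ε) (U : Subspace ζ β ι) :
    MeanOnSubspacesLE η (fun x => g (U x)) ε := fun V => by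
  simpa only [subspaceComp_apply] using hg (subspaceComp U V)

lemma MeanOnSubspacesLE.fiber_left {g : (ι ⊕ κ → β) → ℝ} (hg : MeanOnSubspacesLE η g ε)
    (z : κ → β) : MeanOnSubspacesLE η (fun u => g (Sum.elim u z)) ε := fun U => by
  simpa only [subspaceProdPoint_apply] using hg (subspaceProdPoint U z)

lemma MeanOnSubspacesLE.fiber_right {g : (ι ⊕ κ → β) → ℝ} (hg : MeanOnSubspacesLE η g ε)
    (u : ι → β) : MeanOnSubspacesLE η (fun z => g (Sum.elim u z)) ε := fun U => by
  simpa only [pointProdSubspace_apply] using hg (pointProdSubspace u U)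

end SmallMeans

section Peeling

variable {α : Type u} {η B ι : Type*}

/-- The words which complete every point of the subspace `U`, with `none` replaced by `a`, to a word
in `E`. -/
def commonFiber (a : α) (U : Subspace η (Option α) B) (E : Set (B ⊕ ι → α)) : Set (ι → α) :=
  {z | ∀ x, Sum.elim (letterSubst a (U x)) z ∈ E}

/-- The fiber of `E` over `u`, with the common fiber removed if `u` lies in the subspace `U`. -/
def residualFiber (a : α) (U : Subspace η (Option α) B) (E : Set (B ⊕ ι → α))
    (u : B → Option α) : Set (ι → α) :=
  {z | Sum.elim (letterSubst a u) z ∈ E ∧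
    ¬ (u ∈ Set.range (fun x => U x) ∧ z ∈ commonFiber a U E)}

lemma indicator_letterSubst_preimage_sumElim (a : α) (U : Subspace η (Option α) B)
    (E : Set (B ⊕ ι → α)) (u : B → Option α) (z : ι → Option α) :
    ((letterSubst a ⁻¹' E).indicator 1 (Sum.elim u z) : ℝ) =
      (Set.range fun x => U x).indicator 1 u *
          (letterSubst a ⁻¹' commonFiber a U E).indicator 1 z +
        (letterSubst a ⁻¹' residualFiber a U E u).indicator 1 z := by
  have hE : u ∈ Set.range (fun x => U x) → letterSubst a z ∈ commonFiber a U E →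
      Sum.elim (letterSubst a u) (letterSubst a z) ∈ E := by
    rintro ⟨x, rfl⟩ hz
    exact hz x
  simp only [Set.indicator_apply, Set.mem_preimage, letterSubst_sumElim, residualFiber,
    Set.mem_ofPred_eq, Pi.one_apply]
  by_cases hu : u ∈ Set.range (fun x => U x) <;>
    by_cases hz : letterSubst a z ∈ commonFiber a U E <;> simp [hu, hz, hE]

variable [Fintype α] [Fintype η] [Fintype B] [Fintype ι]

lemma expect_mul_indicator_letterSubst_eq (a : α) (U : Subspace η (Option α) B)
    (E : Set (B ⊕ ι → α)) {inst : Fintype (B ⊕ ι → Option α)} (g : (B ⊕ ι → Option α) → ℝ) :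
    𝔼 x, g x * (letterSubst a ⁻¹' E).indicator 1 x =
      Fintype.card (η → Option α) / Fintype.card (B → Option α) *
          𝔼 z, (letterSubst a ⁻¹' commonFiber a U E).indicator 1 z *
            𝔼 x, g (Sum.elim (U x) z) +
        𝔼 u, 𝔼 z, g (Sum.elim u z) *
          (letterSubst a ⁻¹' residualFiber a U E u).indicator 1 z := by
  simp only [expect_sumElim (fun x => g x * _), indicator_letterSubst_preimage_sumElim a U,
    mul_add, Finset.expect_add_distrib]
  congr 1
  rw [Finset.expect_comm, Finset.mul_expect]
  refine Finset.expect_congr rfl fun z _ => ?_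
  rw [mul_left_comm, ← expect_indicator_range_mul (subspace_injective U) fun u => g (Sum.elim u z),
    Finset.mul_expect]
  exact Finset.expect_congr rfl fun u _ => by ring

lemma density_letterSubst_preimage_eq {ι : Type*} [Finite ι] (a : α) (U : Subspace η (Option α) B)
    (E : Set (B ⊕ ι → α)) :
    density (letterSubst a ⁻¹' E) =
      Fintype.card (η → Option α) / Fintype.card (B → Option α) *
          density (letterSubst a ⁻¹' commonFiber a U E) +
        𝔼 u, density (letterSubst a ⁻¹' residualFiber a U E u) := by
  have := Fintype.ofFinite ι
  simpa only [one_mul, Fintype.expect_const, mul_one, ← density_eq_expect] using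
    expect_mul_indicator_letterSubst_eq a U E (inst := inferInstance) fun _ => 1

variable {a : α} {U : Subspace η (Option α) B} {E : Set (B ⊕ ι → α)}
  {g : (B ⊕ ι → Option α) → ℝ} {ε r : ℝ}

lemma expect_mul_indicator_letterSubst_le_of_residualFiber {_ : Fintype (B ⊕ ι → Option α)}
    (hg : MeanOnSubspacesLE η g ε)
    (hresidual : ∀ u, 𝔼 z, g (Sum.elim u z) *
        (letterSubst a ⁻¹' residualFiber a U E u).indicator 1 z ≤
      (ε + r) * density (letterSubst a ⁻¹' residualFiber a U E u) + ε) :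
    𝔼 x, g x * (letterSubst a ⁻¹' E).indicator 1 x ≤
      ε * density (letterSubst a ⁻¹' E) + ε +
        r * 𝔼 u, density (letterSubst a ⁻¹' residualFiber a U E u) := by
  have hcommon : 𝔼 z, (letterSubst a ⁻¹' commonFiber a U E).indicator 1 z *
      𝔼 x, g (Sum.elim (U x) z) ≤ ε * density (letterSubst a ⁻¹' commonFiber a U E) := by
    rw [density_eq_expect, Finset.mul_expect]
    refine Finset.expect_le_expect fun z _ => ?_
    rw [mul_comm]
    exact mul_le_mul_of_nonneg_right (hg.fiber_left z U) (indicator_one_nonneg _ z)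
  have hrest := Finset.expect_le_expect fun u (_ : u ∈ Finset.univ) => hresidual u
  rw [Finset.expect_add_distrib, Fintype.expect_const, ← Finset.mul_expect] at hrest
  rw [expect_mul_indicator_letterSubst_eq a U, density_letterSubst_preimage_eq a U]
  have hscaled := mul_le_mul_of_nonneg_left hcommon (show (0 : ℝ) ≤
    Fintype.card (η → Option α) / Fintype.card (B → Option α) by positivity)
  linarith

end Peeling

section Chain

variable {α : Type u} [Nonempty α]

lemma HasDensityHalesJewett.exists_commonFiber [Finite α] (h : HasDensityHalesJewett α) (a : α)
    (η : Type) [Finite η] {ε : ℝ} (hε : 0 < ε) : ∃ (B : Type) (_ : Fintype B) (c : ℝ), 0 < c ∧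
      ∀ (ι : Type) [Fintype ι] (E : Set (B ⊕ ι → α)), ε ≤ density (letterSubst a ⁻¹' E) →
        ∃ U : Subspace η (Option α) B, c ≤ density (letterSubst a ⁻¹' commonFiber a U E) := by
  have := Fintype.ofFinite α
  have := Fintype.ofFinite η
  obtain ⟨B, _, hB⟩ := h.exists_subspace_letterSubst a η (half_pos hε)
  refine ⟨B, inferInstance, ε / 2 / (Fintype.card (Subspace η (Option α) B) + 1), by positivity,
    fun ι _ E hE => exists_le_density_of_witness
      (R := fun u : B → Option α => {z | letterSubst a (Sum.elim u z) ∈ E}) hε (fun z hz => ?_)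
      (hE.trans_eq (density_eq_expect_left _))⟩
  refine hB {u | Sum.elim u (letterSubst a z) ∈ E} (hz.trans_eq ?_)
  simp only [Set.mem_ofPred_eq, letterSubst_sumElim]

lemma HasDensityHalesJewett.exists_residualFiber [Fintype α] (h : HasDensityHalesJewett α) (a : α)
    (η : Type) [Finite η] {ε : ℝ} (hε : 0 < ε) :
    ∃ (B : Type) (_ : Fintype B) (r : ℝ), 0 ≤ r ∧ r < 1 ∧
      ∀ (ι : Type) [Fintype ι] (E : Set (B ⊕ ι → α)), ε ≤ density (letterSubst a ⁻¹' E) →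
        ∃ U : Subspace η (Option α) B,
          𝔼 u, density (letterSubst a ⁻¹' residualFiber a U E u) ≤
            r * density (letterSubst a ⁻¹' E) := by
  have := Fintype.ofFinite η
  obtain ⟨B, _, c, hc, hB⟩ := h.exists_commonFiber a η hε
  set ρ : ℝ := Fintype.card (η → Option α) / Fintype.card (B → Option α)
  have hρpos : 0 < ρ := div_pos (Nat.cast_pos.2 Fintype.card_pos) (Nat.cast_pos.2 Fintype.card_pos)
  refine ⟨B, inferInstance, max (1 - ρ * c) 0, le_max_right _ _,
    max_lt (by linarith [mul_pos hρpos hc]) one_pos, fun ι _ E hE => ?_⟩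
  obtain ⟨U, hU⟩ := hB ι E hE
  refine ⟨U, ?_⟩
  have hsplit := density_letterSubst_preimage_eq a U E
  calc
    𝔼 u, density (letterSubst a ⁻¹' residualFiber a U E u)
    _ ≤ density (letterSubst a ⁻¹' E) - ρ * c := by
      linarith [mul_le_mul_of_nonneg_left hU hρpos.le]
    _ ≤ (1 - ρ * c) * density (letterSubst a ⁻¹' E) := by
      linarith [mul_le_mul_of_nonneg_left (density_le_one (letterSubst a ⁻¹' E))
        (mul_pos hρpos hc).le]
    _ ≤ max (1 - ρ * c) 0 * density (letterSubst a ⁻¹' E) :=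
      mul_le_mul_of_nonneg_right (le_max_left _ _) (density_nonneg _)

lemma expect_mul_indicator_le_density {X : Type*} {_ : Fintype X} {g : X → ℝ}
    (hg : ∀ x, g x ≤ 1)
    (A : Set X) : 𝔼 x, g x * A.indicator 1 x ≤ density A := by
  rw [density_eq_expect]
  exact Finset.expect_le_expect fun x _ =>
    mul_le_of_le_one_left (indicator_one_nonneg A x) (hg x)

lemma HasDensityHalesJewett.exists_geometric_bound [Fintype α] (h : HasDensityHalesJewett α) (a : α)
    (η : Type) [Fintype η] {ε : ℝ} (hε : 0 < ε) : ∃ r : ℝ, 0 ≤ r ∧ r < 1 ∧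
      ∀ T : ℕ, ∃ (ι : Type) (_ : Fintype ι), ∀ (E : Set (ι → α)) (g : (ι → Option α) → ℝ),
        (∀ x, g x ≤ 1) → MeanOnSubspacesLE η g ε →
          𝔼 x, g x * (letterSubst a ⁻¹' E).indicator 1 x ≤
            (ε + r ^ T) * density (letterSubst a ⁻¹' E) + ε := by
  obtain ⟨B, _, r, hr, hr1, hB⟩ := h.exists_residualFiber a η hε
  refine ⟨r, hr, hr1, fun T => ?_⟩
  induction T with
  | zero =>
    refine ⟨Empty, inferInstance, fun E g hg _ => ?_⟩
    refine (expect_mul_indicator_le_density hg _).trans ?_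
    linarith [mul_nonneg hε.le (density_nonneg (letterSubst a ⁻¹' E))]
  | succ T ih =>
    obtain ⟨ι, _, hι⟩ := ih
    refine ⟨B ⊕ ι, inferInstance, fun E g hg hmean => ?_⟩
    rcases le_or_gt ε (density (letterSubst a ⁻¹' E)) with hlarge | hsmall
    · obtain ⟨U, hU⟩ := hB ι E hlarge
      refine (expect_mul_indicator_letterSubst_le_of_residualFiber hmean fun u =>
        hι (residualFiber a U E u) (fun z => g (Sum.elim u z)) (fun _ => hg _)
          (hmean.fiber_right u)).trans ?_
      have hshrink := mul_le_mul_of_nonneg_left hU (pow_nonneg hr T)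
      rw [pow_succ]
      linarith
    · refine (expect_mul_indicator_le_density hg _).trans ?_
      have hnonneg : 0 ≤ (ε + r ^ (T + 1)) * density (letterSubst a ⁻¹' E) :=
        mul_nonneg (by positivity) (density_nonneg _)
      linarith

lemma HasDensityHalesJewett.exists_expect_mul_indicator_le [Fintype α]
    (h : HasDensityHalesJewett α) (a : α) (η : Type) [Fintype η] {ε : ℝ} (hε : 0 < ε) :
    ∃ (ι : Type) (_ : Fintype ι), ∀ (E : Set (ι → α)) (g : (ι → Option α) → ℝ),
      (∀ x, g x ≤ 1) → MeanOnSubspacesLE η g ε →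
        𝔼 x, g x * (letterSubst a ⁻¹' E).indicator 1 x ≤ 3 * ε := by
  obtain ⟨r, hr, hr1, hbound⟩ := h.exists_geometric_bound a η hε
  obtain ⟨T, hT⟩ := exists_pow_lt_of_lt_one hε hr1
  obtain ⟨ι, _, hι⟩ := hbound T
  refine ⟨ι, inferInstance, fun E g hg hmean => (hι E g hg hmean).trans ?_⟩
  have hcoeff : 0 ≤ ε + r ^ T := by positivity
  linarith [mul_le_mul_of_nonneg_left (density_le_one (letterSubst a ⁻¹' E)) hcoeff]

lemma HasDensityHalesJewett.exists_expect_mul_prod_indicator_le [Fintype α]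
    (h : HasDensityHalesJewett α) (s : Finset α) (η : Type) [Fintype η] {ε : ℝ} (hε : 0 < ε) :
    ∃ (ι : Type) (_ : Fintype ι), ∀ (E : α → Set (ι → α)) (g : (ι → Option α) → ℝ),
      (∀ x, g x ≤ 1) → MeanOnSubspacesLE η g ε →
        𝔼 x, g x * ∏ a ∈ s, (letterSubst a ⁻¹' E a).indicator 1 x ≤ 3 ^ s.card * ε := by
  induction s using Finset.induction_on generalizing η ε with
  | empty =>
    refine ⟨η, inferInstance, fun E g _ hmean => ?_⟩
    simpa [fullSubspace_apply] using hmean (fullSubspace η _)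
  | insert a s ha ih =>
    obtain ⟨ζ, _, hζ⟩ := h.exists_expect_mul_indicator_le a η hε
    obtain ⟨ι, _, hι⟩ := ih ζ (ε := 3 * ε) (by positivity)
    refine ⟨ι, inferInstance, fun E g hg hmean => ?_⟩
    have hmean' : MeanOnSubspacesLE ζ
        (fun x => g x * (letterSubst a ⁻¹' E a).indicator 1 x) (3 * ε) := by
      intro U
      convert hζ {t | letterSubst a (U fun i => some (t i)) ∈ E a} _ (fun x => hg (U x))
        (hmean.comp U) using 5
      simp only [Set.indicator_apply, Set.mem_preimage, Set.mem_ofPred_eq,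
        ← letterSubst_subspace, Pi.one_apply]
    have hle : ∀ x, g x * (letterSubst a ⁻¹' E a).indicator 1 x ≤ 1 := fun x =>
      (mul_le_of_le_one_left (indicator_one_nonneg _ x) (hg x)).trans (indicator_one_le_one _ x)
    calc
      𝔼 x, g x * ∏ b ∈ insert a s, (letterSubst b ⁻¹' E b).indicator 1 x
      _ = 𝔼 x, g x * (letterSubst a ⁻¹' E a).indicator 1 x *
          ∏ b ∈ s, (letterSubst b ⁻¹' E b).indicator 1 x := by
        simp only [Finset.prod_insert ha, mul_assoc]
      _ ≤ 3 ^ s.card * (3 * ε) := hι E _ hle hmean'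
      _ = 3 ^ (insert a s).card * ε := by
        rw [Finset.card_insert_of_notMem ha, pow_succ, mul_assoc]

end Chain

/-! ### Subspaces on which lines with wildcards have a stable color -/

section StableSubspace

variable {α : Type u} {ι κ η ν M M' N : Type*}

/-- A subspace viewed over the larger alphabet `Option α`. -/
def liftSubspace (Y : Subspace η α ι) : Subspace η (Option α) ι where
  idxFun i := (Y.idxFun i).map some id
  proper e := (Y.proper e).imp fun _ hi => by simp [hi]

lemma liftSubspace_apply (Y : Subspace η α ι) (x : η → Option α) (i : ι) :
    liftSubspace Y x i = (Y.idxFun i).elim some x := by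
  rcases h : Y.idxFun i with _ | _ <;> simp [liftSubspace, Subspace.apply_def, h]

lemma letterSubst_liftSubspace (a : α) (Y : Subspace η α ι) (x : η → Option α) :
    letterSubst a (liftSubspace Y x) = Y (letterSubst a x) := by
  funext i
  rcases h : Y.idxFun i with _ | _ <;>
    simp [letterSubst, liftSubspace, Subspace.apply_def, h]

lemma liftSubspace_reindex_sumElim (Y : Subspace (N ⊕ κ) α M) (e : N ≃ ν) (s : ν → Option α)
    (w : κ → Option α) :
    liftSubspace (Y.reindex (e.sumCongr (.refl κ)) (.refl α) (.refl M)) (Sum.elim s w) =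
      liftSubspace Y (Sum.elim (s ∘ e) w) := by
  funext i
  rcases h : Y.idxFun i with _ | (_ | _) <;> simp [liftSubspace_apply, Subspace.reindex, h]

/-- The point of the subspace `V` with coordinates `x`, in which the constant letters `none` of `V`
are replaced by `o`. -/
def substNone (V : Subspace M (Option α) M') (o : Option α) (x : M → Option α) : M' → Option α :=
  fun i => (V.idxFun i).elim (fun b => b.elim o some) x

lemma substNone_none (V : Subspace M (Option α) M') (x : M → Option α) :
    substNone V none x = V x := by
  funext i
  rcases h : V.idxFun i with (_ | _) | _ <;> simp [substNone, Subspace.apply_def, h]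

/-- The subspace `Y` placed inside `V`, where the constant letters `none` of `V`, together with one
extra coordinate, become a new variable `none`. -/
def wildcardSubspace (V : Subspace M (Option α) M') (Y : Subspace (N ⊕ κ) α M) :
    Subspace (Option N ⊕ κ) α (Option M') where
  idxFun i := i.elim (Sum.inr (Sum.inl none)) fun i => (V.idxFun i).elim
    (fun b => b.elim (Sum.inr (Sum.inl none)) Sum.inl)
    fun m => (Y.idxFun m).map id (Sum.map some id)
  proper := by
    have hproper : ∀ e, ∃ i, (V.idxFun i).elim
        (fun b => b.elim (Sum.inr (Sum.inl none)) Sum.inl)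
        (fun m => (Y.idxFun m).map id (Sum.map some id)) =
          (Sum.inr (Sum.map some id e) : α ⊕ (Option N ⊕ κ)) := by
      intro e
      obtain ⟨m, hm⟩ := Y.proper e
      exact (V.proper m).imp fun i hi => by simp [hi, hm]
    rintro ((_ | n) | k)
    · exact ⟨none, rfl⟩
    · exact (hproper (Sum.inl n)).imp' some fun _ hi => hi
    · exact (hproper (Sum.inr k)).imp' some fun _ hi => hi

lemma liftSubspace_wildcardSubspace (V : Subspace M (Option α) M') (Y : Subspace (N ⊕ κ) α M)
    (s : Option N → Option α) (w : κ → Option α) :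
    liftSubspace (wildcardSubspace V Y) (Sum.elim s w) = fun i => i.elim (s none)
      (substNone V (s none) (liftSubspace Y (Sum.elim (s ∘ some) w))) := by
  funext i
  rcases i with _ | i
  · rfl
  rcases hV : V.idxFun i with (_ | _) | m
  · simp [liftSubspace_apply, wildcardSubspace, substNone, hV]
  · simp [liftSubspace_apply, wildcardSubspace, substNone, hV]
  · rcases hY : Y.idxFun m with _ | (_ | _) <;>
      simp [liftSubspace_apply, wildcardSubspace, substNone, hV, hY]

/-- The color under `f` of a point of `Y` whose `N`-part contains a wildcard does not depend on its
`κ`-part. -/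
def IsStableSubspace {C : Type*} (f : (M → Option α) → C) (Y : Subspace (N ⊕ κ) α M) : Prop :=
  ∀ s : N → Option α, (∃ i, s i = none) →
    ∀ v v', f (liftSubspace Y (Sum.elim s v)) = f (liftSubspace Y (Sum.elim s v'))

lemma isStableSubspace_wildcardSubspace {C : Type*} {f : (Option M' → Option α) → C} {c : C}
    {V : Subspace M (Option α) M'} {Y : Subspace (N ⊕ κ) α M}
    (hV : ∀ x, f (fun i => i.elim none (V x)) = c)
    (hY : IsStableSubspace (fun x a => f fun i => i.elim (some a) (substNone V (some a) x)) Y) :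
    IsStableSubspace f (wildcardSubspace V Y) := by
  rintro s ⟨i, hi⟩ v v'
  simp only [liftSubspace_wildcardSubspace]
  rcases hs : s none with _ | a
  · simp only [substNone_none, hV]
  · rcases i with _ | n
    · cases hs.symm.trans hi
    · exact congrFun (hY (s ∘ some) ⟨n, hi⟩ v v') a

lemma exists_isStableSubspace [Finite α] (κ N : Type) [Finite κ] [Finite N] :
    ∀ (C : Type u) [Finite C], ∃ (M : Type) (_ : Fintype M), ∀ f : (M → Option α) → C,
      ∃ Y : Subspace (N ⊕ κ) α M, IsStableSubspace f Y := by
  induction N using Finite.induction_empty_option with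
  | of_equiv e ih =>
    intro C _
    obtain ⟨M, _, hM⟩ := ih C
    refine ⟨M, inferInstance, fun f => ?_⟩
    obtain ⟨Y, hY⟩ := hM f
    refine ⟨Y.reindex (e.sumCongr (.refl κ)) (.refl α) (.refl M), ?_⟩
    rintro s ⟨i, hi⟩ v v'
    simp only [liftSubspace_reindex_sumElim]
    exact hY _ ⟨e.symm i, by simpa using hi⟩ v v'
  | h_empty =>
    intro C _
    exact ⟨PEmpty ⊕ κ, Fintype.ofFinite _, fun f => ⟨fullSubspace _ _, fun s ⟨i, _⟩ => i.elim⟩⟩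
  | h_option ih =>
    intro C _
    obtain ⟨M, _, hM⟩ := ih (α → C)
    obtain ⟨M', _, hM'⟩ := Subspace.exists_mono_in_high_dimension (Option α) C M
    refine ⟨Option M', inferInstance, fun f => ?_⟩
    obtain ⟨V, c, hV⟩ := hM' fun x => f fun i => i.elim none x
    obtain ⟨Y, hY⟩ := hM fun x a => f fun i => i.elim (some a) (substNone V (some a) x)
    exact ⟨wildcardSubspace V Y, isStableSubspace_wildcardSubspace hV hY⟩

end StableSubspace

/-! ### The density Hales–Jewett theorem -/

section LineFreeFiber

variable {α : Type u} [Fintype α]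

lemma sum_prod_indicator_ite_compl {Z : Type*} (P : α → Set Z) (z : Z) :
    ∑ T : Finset α, ∏ a, (if a ∈ T then P a else (P a)ᶜ).indicator (1 : Z → ℝ) z = 1 := by
  have hone : ∏ a, ((P a).indicator (1 : Z → ℝ) z + (P a)ᶜ.indicator 1 z) = 1 :=
    Finset.prod_eq_one fun a _ => Set.indicator_self_add_compl_apply (P a) 1 z
  rw [← hone, Finset.prod_add, Finset.powerset_univ]
  refine Finset.sum_congr rfl fun T _ => ?_
  rw [← Finset.prod_sdiff (Finset.subset_univ T), mul_comm]
  congr 1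
  · exact Finset.prod_congr rfl fun a ha => by rw [if_pos ha]
  · exact Finset.prod_congr rfl fun a ha => by rw [if_neg (Finset.mem_sdiff.1 ha).2]

lemma prod_indicator_one_apply {Z : Type*} (P : α → Set Z) (z : Z) :
    ∏ a, (P a).indicator (1 : Z → ℝ) z = {z | ∀ a, z ∈ P a}.indicator 1 z := by
  simp only [Set.indicator_apply, Pi.one_apply, Finset.prod_ite_zero, Finset.mem_univ,
    forall_true_left, Finset.prod_const_one, Set.mem_ofPred_eq]

lemma expect_le_add_of_forall_cell_le {Z : Type*} [Fintype Z] {g : Z → ℝ} {P : α → Set Z} {c : ℝ}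
    (hc : 0 ≤ c) (hcell : ∀ T : Finset α,
      𝔼 z, g z * ∏ a, (if a ∈ T then P a else (P a)ᶜ).indicator 1 z ≤ c) :
    𝔼 z, g z ≤ 𝔼 z, g z * {z | ∀ a, z ∈ P a}.indicator 1 z + 2 ^ Fintype.card α * c := by
  set cell : Finset α → Z → ℝ := fun T z => ∏ a, (if a ∈ T then P a else (P a)ᶜ).indicator 1 z
  have hsplit : 𝔼 z, g z = ∑ T : Finset α, 𝔼 z, g z * cell T z := by
    rw [← Finset.expect_sum_comm]
    refine Finset.expect_congr rfl fun z _ => ?_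
    rw [← Finset.mul_sum, sum_prod_indicator_ite_compl, mul_one]
  have hfull : ∀ z, cell Finset.univ z = {z | ∀ a, z ∈ P a}.indicator 1 z := fun z => by
    simp only [cell, Finset.mem_univ, if_true, prod_indicator_one_apply]
  have hrest : ∑ T ∈ Finset.univ.erase Finset.univ, 𝔼 z, g z * cell T z ≤
      2 ^ Fintype.card α * c :=
    calc
      ∑ T ∈ Finset.univ.erase Finset.univ, 𝔼 z, g z * cell T z
      _ ≤ (Finset.univ.erase (Finset.univ : Finset α)).card • c :=
        Finset.sum_le_card_nsmul _ _ _ fun T _ => hcell T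
      _ ≤ (Finset.univ : Finset (Finset α)).card • c :=
        nsmul_le_nsmul_left hc (Finset.card_erase_le)
      _ = 2 ^ Fintype.card α * c := by simp
  rw [hsplit, ← Finset.add_sum_erase _ _ (Finset.mem_univ Finset.univ)]
  simp only [hfull]
  exact add_le_add_right hrest _

lemma expect_indicator_sub_const {Z : Type*} [Fintype Z] [Nonempty Z] (F : Set Z) (D : ℝ) :
    𝔼 z, (F.indicator 1 z - D) = density F - D := by
  rw [Finset.expect_sub_distrib, Fintype.expect_const, density_eq_expect]

-- The conditions `letterSubst a v ∈ E a` split the space into `2 ^ |α|` cells. The set `F` misses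
-- one of them, and `1_F - D` has mean at most `3 ^ |α| * ε` over each of the others.
lemma HasDensityHalesJewett.exists_density_le_of_forall_notMem [Nonempty α]
    (h : HasDensityHalesJewett α) (η : Type) [Finite η] {D ε : ℝ} (hD : 0 ≤ D) (hε : 0 < ε)
    (hη : ∀ A : Set (η → Option α), IsLineFree A → density A ≤ D) :
    ∃ (κ : Type) (_ : Fintype κ), ∀ (F : Set (κ → Option α)) (E : α → Set (κ → α)),
      IsLineFree F → (∀ v ∈ F, ¬ ∀ a, letterSubst a v ∈ E a) →
        density F ≤ D * (1 - density {v : κ → Option α | ∀ a, letterSubst a v ∈ E a}) +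
          2 ^ Fintype.card α * (3 ^ Fintype.card α * ε) := by
  have := Fintype.ofFinite η
  obtain ⟨κ, _, hκ⟩ := h.exists_expect_mul_prod_indicator_le Finset.univ η hε
  refine ⟨κ, inferInstance, fun F E hF hFE => ?_⟩
  set g : (κ → Option α) → ℝ := fun v => F.indicator 1 v - D with hg
  set C : Set (κ → Option α) := {v | ∀ a, letterSubst a v ∈ E a}
  have hmean : MeanOnSubspacesLE η g ε := fun U =>
    calc
      𝔼 x, g (U x) = density {x | U x ∈ F} - D := expect_indicator_sub_const {x | U x ∈ F} D
      _ ≤ ε := by linarith [hη _ (hF.preimage U)]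
  have hcell : ∀ T : Finset α, 𝔼 v, g v * ∏ a, (if a ∈ T then letterSubst a ⁻¹' E a else
      (letterSubst a ⁻¹' E a)ᶜ).indicator 1 v ≤ 3 ^ Fintype.card α * ε := by
    intro T
    rw [← Finset.card_univ]
    convert hκ (fun a => if a ∈ T then E a else (E a)ᶜ) g
      (fun v => by linarith [indicator_one_le_one F v]) hmean using 6 with v _ a _
    split_ifs <;> rfl
  have hC : 𝔼 v, g v * C.indicator 1 v = - (D * density C) := by
    rw [density_eq_expect, Finset.mul_expect, ← Finset.expect_neg_distrib]
    refine Finset.expect_congr rfl fun v _ => ?_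
    by_cases hv : v ∈ C
    · simp [hg, hv, show v ∉ F from fun hvF => hFE v hvF hv]
    · simp [hv]
  have hcells := expect_le_add_of_forall_cell_le (by positivity) hcell
  rw [show {v | ∀ a, v ∈ letterSubst a ⁻¹' E a} = C from rfl, hC, expect_indicator_sub_const]
    at hcells
  linarith

end LineFreeFiber

section LineFreeDensity

variable (β : Type u)

/-- The infimum over all dimensions of the maximal density of a line-free set of words over `β`. -/
noncomputable def lineFreeDensity : ℝ :=
  sInf {x | ∃ (ι : Type) (_ : Fintype ι), ∀ A : Set (ι → β), IsLineFree A → density A ≤ x}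

variable {β}

lemma exists_density_le_lineFreeDensity_add [Finite β] {γ : ℝ} (hγ : 0 < γ) :
    ∃ (ι : Type) (_ : Fintype ι), ∀ A : Set (ι → β), IsLineFree A →
      density A ≤ lineFreeDensity β + γ := by
  have hone : ∃ (ι : Type) (_ : Fintype ι), ∀ A : Set (ι → β), IsLineFree A → density A ≤ 1 :=
    ⟨Unit, inferInstance, fun A _ => density_le_one A⟩
  obtain ⟨x, ⟨ι, _, hx⟩, hlt⟩ :=
    exists_lt_of_csInf_lt ⟨1, hone⟩ (lt_add_of_pos_right (lineFreeDensity β) hγ)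
  exact ⟨ι, inferInstance, fun A hA => (hx A hA).trans hlt.le⟩

lemma exists_isLineFree_lineFreeDensity_sub_le [Nonempty β] {γ : ℝ} (hγ : 0 < γ) (ι : Type)
    [Finite ι] : ∃ A : Set (ι → β), IsLineFree A ∧ lineFreeDensity β - γ ≤ density A := by
  have := Fintype.ofFinite ι
  by_contra! hdense
  have hempty : ∀ ι : Type, IsLineFree (∅ : Set (ι → β)) := by
    rintro ι ⟨_, hl⟩
    exact hl (Classical.arbitrary β)
  have hbdd : BddBelow {x | ∃ (ι : Type) (_ : Fintype ι), ∀ A : Set (ι → β), IsLineFree A →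
      density A ≤ x} :=
    ⟨0, fun x ⟨ι, _, hx⟩ => (density_nonneg _).trans (hx ∅ (hempty ι))⟩
  have hle : lineFreeDensity β ≤ lineFreeDensity β - γ :=
    csInf_le hbdd ⟨ι, inferInstance, fun A hA => (hdense A hA).le⟩
  linarith

lemma hasDensityHalesJewett_of_lineFreeDensity_nonpos [Finite β] (h : lineFreeDensity β ≤ 0) :
    HasDensityHalesJewett β := by
  intro ε hε
  obtain ⟨ι, _, hι⟩ := exists_density_le_lineFreeDensity_add (β := β) (half_pos hε)
  exact ⟨ι, inferInstance, fun A hA => by linarith [hι A hA]⟩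

-- The fibers have mean density close to the infimum, and none can exceed it by much.
lemma exists_isLineFree_le_density_fiber [Finite β] [Nonempty β] {γ : ℝ} (hγ : 0 < γ) (M : Type)
    [Finite M] : ∃ (R : Type) (_ : Fintype R) (A : Set (M ⊕ R → β)), IsLineFree A ∧
      ∀ t : M → β, lineFreeDensity β - γ ≤ density {y : R → β | Sum.elim t y ∈ A} := by
  have := Fintype.ofFinite β
  have := Fintype.ofFinite M
  have : (0 : ℝ) < Fintype.card (M → β) := Nat.cast_pos.2 Fintype.card_pos
  have hγ' : 0 < γ / (2 * Fintype.card (M → β)) := by positivity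
  obtain ⟨R, _, hR⟩ := exists_density_le_lineFreeDensity_add (β := β) hγ'
  obtain ⟨A, hA, hAdense⟩ := exists_isLineFree_lineFreeDensity_sub_le (β := β) hγ' (M ⊕ R)
  rw [density_eq_expect_left] at hAdense
  refine ⟨R, inferInstance, A, hA, fun t => ?_⟩
  have hle := le_apply_of_le_expect hγ'.le hAdense (fun t => hR _ (hA.fiber_right t)) t
  rwa [mul_div_cancel₀ _ (by positivity)] at hle

end LineFreeDensity

section DensityHalesJewettStep

variable {α : Type u} {M R : Type*}

/-- The words `y` for which every substitution of a letter for the wildcards of `x`, followed by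
`y`, is in `A`. -/
def commonTails (A : Set (M ⊕ R → Option α)) (x : M → Option α) : Set (R → Option α) :=
  {y | ∀ a, Sum.elim (fun i => some (letterSubst a x i)) y ∈ A}

lemma IsLineFree.notMem_commonTails {A : Set (M ⊕ R → Option α)} (hA : IsLineFree A)
    {x : M → Option α} (hx : ∃ i, x i = none) {y : R → Option α} (hxy : Sum.elim x y ∈ A) :
    y ∉ commonTails A x := by
  intro hy
  obtain ⟨i, hi⟩ := hx
  refine hA ⟨⟨Sum.elim (fun i => (x i).map some) fun j => some (y j), Sum.inl i, by simp [hi]⟩, ?_⟩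
  rintro (_ | a)
  · convert hxy using 1
    funext j
    rcases j with j | j
    · cases hj : x j <;> simp [hj]
    · rfl
  · convert hy a using 1
    funext j
    rcases j with j | j
    · cases hj : x j <;> simp [letterSubst, hj]
    · rfl

lemma HasDensityHalesJewett.exists_le_density_commonTails [Finite α] [Nonempty α]
    (h : HasDensityHalesJewett α) {ε : ℝ} (hε : 0 < ε) :
    ∃ θ : ℝ, 0 < θ ∧ ∀ (κ : Type) [Finite κ], ∃ (M : Type) (_ : Fintype M),
      ∀ (R : Type) [Fintype R] (A : Set (M ⊕ R → Option α)),
        (∀ t : M → Option α, ε ≤ density {y : R → Option α | Sum.elim t y ∈ A}) →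
          ∃ U : Subspace κ (Option α) M,
            ∀ v, (∃ i, U v i = none) ∧ θ ≤ density (commonTails A (U v)) := by
  have := Fintype.ofFinite α
  obtain ⟨ι, _, θ, hθ, hline⟩ := h.exists_line_le_density hε
  refine ⟨θ, hθ, fun κ _ => ?_⟩
  obtain ⟨M, _, hM⟩ := exists_isStableSubspace (α := α) κ ι (ULift Prop)
  refine ⟨M, inferInstance, fun R _ A hA => ?_⟩
  obtain ⟨Y, hY⟩ := hM fun x => ⟨θ ≤ density (commonTails A x)⟩
  obtain ⟨v₀⟩ : Nonempty (κ → α) := inferInstance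
  obtain ⟨l, hl⟩ := hline (R → Option α)
    (fun s => {y | Sum.elim (fun i => some (Y (Sum.elim s v₀) i)) y ∈ A})
    (Finset.le_expect Finset.univ_nonempty fun s _ => hA _)
  refine ⟨subspaceComp (liftSubspace Y) (pointProdSubspace l.idxFun (fullSubspace κ _)),
    fun v => ?_⟩
  rw [subspaceComp_apply, pointProdSubspace_apply, fullSubspace_apply]
  constructor
  · obtain ⟨j, hj⟩ := l.proper
    obtain ⟨i, hi⟩ := Y.proper (Sum.inl j)
    exact ⟨i, by simp [liftSubspace_apply, hi, hj]⟩
  · have hstable := congrArg ULift.down (hY l.idxFun l.proper v fun i => some (v₀ i))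
    refine hstable.mpr (hl.trans_eq (congrArg density ?_))
    simp only [commonTails, letterSubst_liftSubspace, letterSubst_sumElim]
    rfl

lemma HasDensityHalesJewett.exists_density_fiber_le [Finite α] [Nonempty α]
    (h : HasDensityHalesJewett α) (η : Type) [Finite η] {D ε : ℝ} (hD : 0 ≤ D) (hε : 0 < ε)
    (hη : ∀ A : Set (η → Option α), IsLineFree A → density A ≤ D) :
    ∃ (κ : Type) (_ : Fintype κ), ∀ (M R : Type) (A : Set (M ⊕ R → Option α))
      (U : Subspace κ (Option α) M), IsLineFree A → (∀ v, ∃ i, U v i = none) →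
        ∀ y, density {v | Sum.elim (U v) y ∈ A} ≤
          D * (1 - density {v | y ∈ commonTails A (U v)}) + ε := by
  have := Fintype.ofFinite α
  obtain ⟨κ, _, hκ⟩ := h.exists_density_le_of_forall_notMem η
    (ε := ε / 3 ^ Fintype.card α / 2 ^ Fintype.card α) hD (by positivity) hη
  have herror : (2 : ℝ) ^ Fintype.card α * (3 ^ Fintype.card α *
      (ε / 3 ^ Fintype.card α / 2 ^ Fintype.card α)) = ε := by field_simp
  rw [herror] at hκ
  refine ⟨κ, inferInstance, fun M R A U hA hU y => ?_⟩
  have hE : ∀ v : κ → Option α, (∀ a, letterSubst a v ∈ {t | Sum.elim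
      (fun i => some (letterSubst a (U fun i => some (t i)) i)) y ∈ A}) ↔
        y ∈ commonTails A (U v) := fun v => forall_congr' fun a => by
    rw [Set.mem_ofPred_eq, ← letterSubst_subspace]
  have hlinefree : IsLineFree {v | Sum.elim (U v) y ∈ A} := (hA.fiber_left y).preimage U
  simpa only [hE] using hκ _ _ hlinefree fun v hv hall =>
    hA.notMem_commonTails (hU v) hv ((hE v).1 hall)

theorem HasDensityHalesJewett.option [Finite α] [Nonempty α] (h : HasDensityHalesJewett α) :
    HasDensityHalesJewett (Option α) := by
  have := Fintype.ofFinite α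
  set d := lineFreeDensity (Option α)
  by_contra hcontra
  have hd : 0 < d :=
    not_le.1 fun hle => hcontra (hasDensityHalesJewett_of_lineFreeDensity_nonpos hle)
  obtain ⟨θ, hθ, htails⟩ := h.exists_le_density_commonTails (half_pos hd)
  have hdθ : 0 < d * θ / 8 := by positivity
  obtain ⟨η, _, hη⟩ := exists_density_le_lineFreeDensity_add (β := Option α) hdθ
  obtain ⟨κ, _, hκ⟩ := h.exists_density_fiber_le η (by positivity) hdθ hη
  obtain ⟨M, _, hM⟩ := htails κ
  obtain ⟨R, _, A, hA, hfiber⟩ := exists_isLineFree_le_density_fiber (β := Option α)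
    (γ := min (d * θ / 8) (d / 2)) (by positivity) M
  obtain ⟨U, hU⟩ := hM R A fun t => by linarith [hfiber t, min_le_right (d * θ / 8) (d / 2)]
  have htotal : d - d * θ / 8 ≤ 𝔼 y : R → Option α, density {v | Sum.elim (U v) y ∈ A} := by
    refine le_trans ?_ (expect_density_comm fun v => {y | Sum.elim (U v) y ∈ A}).le
    refine Finset.le_expect Finset.univ_nonempty fun v _ => ?_
    linarith [hfiber (U v), min_le_left (d * θ / 8) (d / 2)]
  have hcommon : θ ≤ 𝔼 y, density {v | y ∈ commonTails A (U v)} := by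
    rw [← expect_density_comm]
    exact Finset.le_expect Finset.univ_nonempty fun v _ => (hU v).2
  have haverage := htotal.trans
    (Finset.expect_le_expect fun y _ => hκ M R A U hA (fun v => (hU v).1) y)
  rw [Finset.expect_add_distrib, Fintype.expect_const, ← Finset.mul_expect,
    Finset.expect_sub_distrib, Fintype.expect_const] at haverage
  nlinarith [mul_le_mul_of_nonneg_left hcommon (show 0 ≤ d + d * θ / 8 by positivity),
    mul_pos hdθ hθ]

end DensityHalesJewettStep

section DensityHalesJewett

lemma HasDensityHalesJewett.of_equiv {α : Type u} {β : Type*} (e : α ≃ β)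
    (h : HasDensityHalesJewett α) : HasDensityHalesJewett β := by
  intro ε hε
  obtain ⟨ι, _, hι⟩ := h ε hε
  refine ⟨ι, inferInstance, fun A hA => ?_⟩
  rw [← density_preimage_equiv (Equiv.arrowCongr (Equiv.refl ι) e)]
  refine hι _ ?_
  rintro ⟨l, hl⟩
  refine hA ⟨l.map e, fun b => ?_⟩
  rw [← e.apply_symm_apply b, l.map_apply]
  exact hl (e.symm b)

lemma hasDensityHalesJewett_of_subsingleton (α : Type*) [Finite α] [Subsingleton α] :
    HasDensityHalesJewett α := by
  have := Fintype.ofFinite α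
  intro ε hε
  refine ⟨Unit, inferInstance, fun A hA => ?_⟩
  by_contra! hdense
  obtain ⟨x, hx⟩ := nonempty_of_density_pos (hε.trans_le hdense)
  refine hA ⟨⟨fun _ => none, (), rfl⟩, fun a => ?_⟩
  convert hx using 1

theorem hasDensityHalesJewett (α : Type u) [Finite α] : HasDensityHalesJewett α := by
  induction α using Finite.induction_empty_option with
  | of_equiv e ih => exact ih.of_equiv e
  | h_empty => exact hasDensityHalesJewett_of_subsingleton _
  | @h_option α _ ih =>
    rcases isEmpty_or_nonempty α
    · exact hasDensityHalesJewett_of_subsingleton _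
    · exact ih.option

end DensityHalesJewett

/-! ### Counting progressions in dense sets of integers -/

section Varnavides

/-- The pairs `(a, d)` with `a, d ∈ {1, …, n}` for which the `k`-term progression with first term
`a` and common difference `d` is contained in `B`. -/
noncomputable def progressions (n k : ℕ) (B : Finset ℕ) : Finset (ℕ × ℕ) :=
  {q ∈ Finset.Icc 1 n ×ˢ Finset.Icc 1 n | ∀ i < k, q.1 + i * q.2 ∈ B}

/-- The words over `{0, …, k - 1}` whose image under `x ↦ q.1 + q.2 * ∑ i, x i` is in `B`. This map
sends combinatorial lines to `k`-term progressions. -/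
def wordsInto {ι : Type*} [Fintype ι] {k : ℕ} (B : Finset ℕ) (q : ℕ × ℕ) : Set (ι → Fin k) :=
  {x | q.1 + q.2 * ∑ i, (x i : ℕ) ∈ B}

lemma sum_fin_le_mul_card {ι : Type*} [Fintype ι] {k : ℕ} (x : ι → Fin k) :
    ∑ i, (x i : ℕ) ≤ k * Fintype.card ι :=
  (Finset.sum_le_card_nsmul _ _ k fun i _ => (x i).2.le).trans_eq (by simp [mul_comm])

lemma exists_forall_sum_line_eq {ι : Type*} [Fintype ι] {k : ℕ} (l : Line (Fin k) ι) :
    ∃ s w : ℕ, s ≤ k * Fintype.card ι ∧ 0 < w ∧ w ≤ Fintype.card ι ∧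
      ∀ j : Fin k, ∑ i, (l j i : ℕ) = s + j * w := by
  refine ⟨∑ i, (l.idxFun i).elim 0 fun c => (c : ℕ),
    (Finset.univ.filter fun i => l.idxFun i = none).card, ?_, ?_, Finset.card_le_univ _, ?_⟩
  · refine (Finset.sum_le_card_nsmul _ _ k fun i _ => ?_).trans (by simp [mul_comm])
    cases l.idxFun i <;> simp
  · obtain ⟨i, hi⟩ := l.proper
    exact Finset.card_pos.2 ⟨i, by simpa using hi⟩
  · intro j
    rw [Finset.card_filter, Finset.mul_sum, ← Finset.sum_add_distrib]
    refine Finset.sum_congr rfl fun i _ => ?_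
    simp only [Line.apply_def]
    cases l.idxFun i <;> simp

lemma card_le_card_filter_add_mem_add {n : ℕ} {B : Finset ℕ} (hB : B ⊆ Finset.Icc 1 n) (t : ℕ) :
    B.card ≤ {a ∈ Finset.Icc 1 n | a + t ∈ B}.card + t := by
  have hsub : B ⊆ {a ∈ Finset.Icc 1 n | a + t ∈ B}.image (· + t) ∪ Finset.Icc 1 t := by
    intro y hy
    have := Finset.mem_Icc.1 (hB hy)
    simp only [Finset.mem_union, Finset.mem_image, Finset.mem_filter, Finset.mem_Icc]
    rcases le_or_gt y t with hyt | hyt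
    · exact Or.inr ⟨this.1, hyt⟩
    · refine Or.inl ⟨y - t, ⟨by omega, ?_⟩, by omega⟩
      rwa [Nat.sub_add_cancel hyt.le]
  refine (Finset.card_le_card hsub).trans <| (Finset.card_union_le _ _).trans ?_
  rw [Nat.card_Icc, Nat.add_sub_cancel]
  exact Nat.add_le_add_right Finset.card_image_le _

lemma mul_le_sum_density_wordsInto {ι : Type*} [Fintype ι] {k : ℕ} [NeZero k] {n : ℕ}
    {B : Finset ℕ} (hB : B ⊆ Finset.Icc 1 n) (L : ℕ) :
    (L : ℝ) * (B.card - L * (k * Fintype.card ι : ℕ)) ≤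
      ∑ q ∈ Finset.Icc 1 n ×ˢ Finset.Icc 1 L,
        density (wordsInto B q : Set (ι → Fin k)) := by
  simp only [density_eq_expect]
  rw [← Finset.expect_sum_comm]
  refine Finset.le_expect Finset.univ_nonempty fun x _ => ?_
  have hshift : ∀ b ∈ Finset.Icc 1 L, (B.card - L * (k * Fintype.card ι : ℕ) : ℝ) ≤
      ∑ a ∈ Finset.Icc 1 n, (wordsInto B (a, b)).indicator 1 x := by
    intro b hb
    have hle : b * ∑ i, (x i : ℕ) ≤ L * (k * Fintype.card ι) :=
      Nat.mul_le_mul (Finset.mem_Icc.1 hb).2 (sum_fin_le_mul_card x)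
    have hcard := (card_le_card_filter_add_mem_add hB _).trans (Nat.add_le_add_left hle _)
    rw [Finset.card_filter] at hcard
    simp only [Set.indicator_apply, wordsInto, Set.mem_ofPred_eq, Pi.one_apply]
    rw [sub_le_iff_le_add]
    exact_mod_cast hcard
  rw [Finset.sum_product_right]
  simpa using Finset.card_nsmul_le_sum _ _ _ hshift

lemma sum_le_card_filter_le_add {X : Type*} (s : Finset X) {f : X → ℝ} (hf : ∀ x, f x ≤ 1)
    {t : ℝ} (ht : 0 ≤ t) :
    ∑ x ∈ s, f x ≤ {x ∈ s | t ≤ f x}.card + t * s.card := by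
  calc ∑ x ∈ s, f x ≤ ∑ x ∈ s, ((if t ≤ f x then 1 else 0) + t) := by
        refine Finset.sum_le_sum fun x _ => ?_
        split_ifs
        · linarith [hf x]
        · linarith
    _ = {x ∈ s | t ≤ f x}.card + t * s.card := by
        rw [Finset.sum_add_distrib, Finset.sum_const, nsmul_eq_mul, Finset.card_filter, mul_comm t]
        push_cast
        rfl

variable {ι : Type*} [Fintype ι] {k n : ℕ} {ε : ℝ} {B : Finset ℕ}

lemma exists_progression_of_not_isLineFree {q : ℕ × ℕ}
    (hq : ¬ IsLineFree (wordsInto B q : Set (ι → Fin k))) :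
    ∃ s w : ℕ, s ≤ k * Fintype.card ι ∧ 0 < w ∧ w ≤ Fintype.card ι ∧
      ∀ j < k, (q.1 + q.2 * s) + j * (q.2 * w) ∈ B := by
  obtain ⟨l, hl⟩ := not_not.1 hq
  obtain ⟨s, w, hs, hw, hwle, hsum⟩ := exists_forall_sum_line_eq l
  refine ⟨s, w, hs, hw, hwle, fun j hj => ?_⟩
  have hmem : q.1 + q.2 * ∑ i, (l ⟨j, hj⟩ i : ℕ) ∈ B := hl ⟨j, hj⟩
  rw [hsum] at hmem
  convert hmem using 1
  ring

lemma card_filter_not_isLineFree_wordsInto_le (hk : 0 < k) (hB : B ⊆ Finset.Icc 1 n) {L : ℕ}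
    (hL : L * Fintype.card ι ≤ n) :
    {q ∈ Finset.Icc 1 n ×ˢ Finset.Icc 1 L |
        ¬ IsLineFree (wordsInto B q : Set (ι → Fin k))}.card ≤
      (progressions n k B).card * ((k * Fintype.card ι + 1) * (Fintype.card ι + 1)) := by
  choose! s w hs hw hwle hB' using fun q =>
    exists_progression_of_not_isLineFree (ι := ι) (k := k) (B := B) (q := q)
  rw [← Finset.card_range (k * Fintype.card ι + 1), ← Finset.card_range (Fintype.card ι + 1),
    ← Finset.card_product, ← Finset.card_product]
  refine Finset.card_le_card_of_injOn
    (fun q => ((q.1 + q.2 * s q, q.2 * w q), (s q, w q))) ?_ ?_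
  · intro q hq
    obtain ⟨hqX, hq⟩ := Finset.mem_filter.1 hq
    simp only [Finset.mem_product, Finset.mem_Icc] at hqX
    have hfirst : q.1 + q.2 * s q ∈ B := by simpa using hB' q hq 0 hk
    have hdiff : q.2 * w q ≤ n := (Nat.mul_le_mul hqX.2.2 (hwle q hq)).trans hL
    simp only [Finset.coe_product, Set.mem_prod, Finset.mem_coe, Finset.mem_range, progressions,
      Finset.mem_filter, Finset.mem_product]
    exact ⟨⟨⟨hB hfirst, Finset.mem_Icc.2 ⟨Nat.mul_pos hqX.2.1 (hw q hq), hdiff⟩⟩, hB' q hq⟩,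
      Nat.lt_succ_of_le (hs q hq), Nat.lt_succ_of_le (hwle q hq)⟩
  · intro q hq r _ h
    simp only [Prod.mk.injEq] at h
    obtain ⟨⟨hfirst, hdiff⟩, hs_eq, hw_eq⟩ := h
    rw [← hs_eq] at hfirst
    rw [← hw_eq] at hdiff
    have hsnd : q.2 = r.2 :=
      Nat.eq_of_mul_eq_mul_right (hw q (Finset.mem_filter.1 hq).2) hdiff
    rw [hsnd] at hfirst
    exact Prod.ext (Nat.add_right_cancel hfirst) hsnd

lemma mul_sub_le_card_progressions_mul [NeZero k] (hε : 0 ≤ ε)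
    (hι : ∀ A : Set (ι → Fin k), IsLineFree A → density A < ε) (hB : B ⊆ Finset.Icc 1 n) {L : ℕ}
    (hL : L * Fintype.card ι ≤ n) :
    L * (B.card - L * (k * Fintype.card ι : ℕ) - ε * n) ≤
      ((progressions n k B).card : ℝ) *
        ((k * Fintype.card ι + 1 : ℕ) * (Fintype.card ι + 1 : ℕ)) := by
  set X := Finset.Icc 1 n ×ˢ Finset.Icc 1 L
  have hlower := mul_le_sum_density_wordsInto (ι := ι) (k := k) hB L
  have hmarkov := sum_le_card_filter_le_add X
    (fun q => density_le_one (wordsInto B q : Set (ι → Fin k))) hε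
  have hdense : {q ∈ X | ε ≤ density (wordsInto B q : Set (ι → Fin k))}.card ≤
      {q ∈ X | ¬ IsLineFree (wordsInto B q : Set (ι → Fin k))}.card :=
    Finset.card_le_card <| Finset.monotone_filter_right _ fun q _ hq hfree =>
      (hι _ hfree).not_ge hq
  have hcount := hdense.trans (card_filter_not_isLineFree_wordsInto_le (NeZero.pos k) hB hL)
  have hX : (X.card : ℝ) = n * L := by simp [X]
  rw [hX] at hmarkov
  have hcount' : ({q ∈ X | ε ≤ density (wordsInto B q : Set (ι → Fin k))}.card : ℝ) ≤ _ :=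
    Nat.cast_le.2 hcount
  push_cast at hcount' hlower ⊢
  linarith

lemma exists_nat_mul_le_half_and_div_le {m x : ℝ} (hm : 0 < m) (hx : 4 * m ≤ x) :
    ∃ L : ℕ, L * m ≤ x / 2 ∧ x / (4 * m) ≤ L := by
  have hx0 : 0 ≤ x / (2 * m) := div_nonneg (by linarith) (by positivity)
  refine ⟨⌊x / (2 * m)⌋₊, ?_, ?_⟩
  · have := Nat.floor_le hx0
    rw [le_div_iff₀ (by positivity)] at this
    linarith
  · have := Nat.lt_floor_add_one (x / (2 * m))
    rw [div_lt_iff₀ (by positivity)] at this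
    rw [div_le_iff₀ (by positivity)]
    linarith

theorem exists_mul_sq_le_card_progressions {k : ℕ} (hk : 0 < k) {δ : ℝ} (hδ : 0 < δ) :
    ∃ c : ℝ, 0 < c ∧ ∀ᶠ n : ℕ in Filter.atTop, ∀ B ⊆ Finset.Icc 1 n, δ * n ≤ B.card →
      c * (n : ℝ) ^ 2 ≤ (progressions n k B).card := by
  have : NeZero k := ⟨hk.ne'⟩
  obtain ⟨ι, _, hι⟩ := hasDensityHalesJewett (Fin k) (δ / 4) (by positivity)
  set N := Fintype.card ι
  set m := k * N + 1 with hm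
  refine ⟨δ ^ 2 / (16 * m * (m * (N + 1))), by positivity, ?_⟩
  filter_upwards [Filter.eventually_ge_atTop ⌈4 * m / δ⌉₊, Filter.eventually_gt_atTop 0]
    with n hn hn0 B hB hdense
  have hn : 4 * m ≤ n * δ := (div_le_iff₀ hδ).1 (Nat.ceil_le.1 hn)
  have hδ1 : δ * n ≤ n := hdense.trans (by exact_mod_cast by simpa using Finset.card_le_card hB)
  obtain ⟨L, hL_le, hle_L⟩ := exists_nat_mul_le_half_and_div_le (m := m) (x := δ * n)
    (by positivity) (by linarith)
  have hLN : L * N ≤ n := by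
    have hLm : L * m ≤ n := by
      have : (L * m : ℝ) ≤ n := by linarith [hL_le, Nat.cast_nonneg (α := ℝ) n]
      exact_mod_cast this
    exact (Nat.mul_le_mul_left L (by rw [hm]; nlinarith)).trans hLm
  have hcount := mul_sub_le_card_progressions_mul (by positivity) hι hB hLN
  have hquarter : δ * n / 4 ≤ B.card - L * (k * N : ℕ) - δ / 4 * n := by
    have : (L : ℝ) * (k * N : ℕ) ≤ L * m := by gcongr; omega
    linarith
  have hN : (0 : ℝ) < m * (N + 1) := by positivity
  calc δ ^ 2 / (16 * m * (m * (N + 1))) * (n : ℝ) ^ 2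
      = δ * n / (4 * m) * (δ * n / 4) / (m * (N + 1)) := by field_simp; ring
    _ ≤ L * (B.card - L * (k * N : ℕ) - δ / 4 * n) / (m * (N + 1)) := by gcongr
    _ ≤ (progressions n k B).card := by
      rw [div_le_iff₀ hN]
      simpa [hm] using hcount

end Varnavides

/-! ### Hypergraph containers -/

section Fingerprint

variable {V : Type*}

/-- `S I ⊆ I` is a fingerprint of `I` for the container map `R`: both `R I` and `S I` are
determined by any set between `S I` and `I`, in particular by `S I` alone. -/
def IsFingerprint (R S : Finset V → Finset V) : Prop :=
  ∀ I, S I ⊆ I ∧ ∀ J, S I ⊆ J → J ⊆ I → R J = R I ∧ S J = S I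

lemma isFingerprint_const (F : Finset V) : IsFingerprint (fun _ => F) fun _ => ∅ :=
  fun I => ⟨Finset.empty_subset I, fun _ _ _ => ⟨rfl, rfl⟩⟩

variable [DecidableEq V]

/-- The sets `I` with property `P` can be covered within `C` by containers of size at most `m`
that are determined by fingerprints of size at most `s`. -/
def HasContainers (P : Finset V → Prop) (C : Finset V) (m s : ℝ) : Prop :=
  ∃ R S : Finset V → Finset V, IsFingerprint R S ∧ ∀ I, P I →
    I ∩ C ⊆ R I ∪ S I ∧ R I ⊆ C ∧ ((R I).card : ℝ) ≤ m ∧ ((S I).card : ℝ) ≤ s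

variable {R S R₁ S₁ R₂ S₂ : Finset V → Finset V}

lemma IsFingerprint.inter (h : IsFingerprint R S) (C : Finset V) :
    IsFingerprint (fun I => R I ∩ C) S := by
  refine fun I => ⟨(h I).1, fun J hSJ hJI => ?_⟩
  obtain ⟨hR, hS⟩ := (h I).2 J hSJ hJI
  exact ⟨by simp only [hR], hS⟩

lemma IsFingerprint.ite_mem (h₁ : IsFingerprint R₁ S₁) (h₂ : IsFingerprint R₂ S₂) (v : V) :
    IsFingerprint (fun I => if v ∈ I then R₁ I else R₂ I)
      (fun I => if v ∈ I then insert v (S₁ I) else S₂ I) := by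
  intro I
  by_cases hv : v ∈ I
  · simp only [hv, if_true]
    refine ⟨Finset.insert_subset hv (h₁ I).1, fun J hSJ hJI => ?_⟩
    obtain ⟨hvJ, hSJ⟩ := Finset.insert_subset_iff.1 hSJ
    obtain ⟨hR, hS⟩ := (h₁ I).2 J hSJ hJI
    simp only [hvJ, if_true, hR, hS, and_self]
  · simp only [hv, if_false]
    refine ⟨(h₂ I).1, fun J hSJ hJI => ?_⟩
    rw [if_neg fun h => hv (hJI h), if_neg fun h => hv (hJI h)]
    exact (h₂ I).2 J hSJ hJI

lemma IsFingerprint.bind (h₁ : IsFingerprint R₁ S₁) {R₂ S₂ : Finset V → Finset V → Finset V}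
    (h₂ : ∀ F, IsFingerprint (R₂ F) (S₂ F)) :
    IsFingerprint (fun I => R₂ (R₁ I) I) fun I => S₁ I ∪ S₂ (R₁ I) I := by
  refine fun I => ⟨Finset.union_subset (h₁ I).1 (h₂ _ I).1, fun J hSJ hJI => ?_⟩
  obtain ⟨hS₁J, hS₂J⟩ := Finset.union_subset_iff.1 hSJ
  obtain ⟨hR₁, hS₁⟩ := (h₁ I).2 J hS₁J hJI
  obtain ⟨hR₂, hS₂⟩ := (h₂ (R₁ I) I).2 J hS₂J hJI
  simp only [hR₁, hS₁, hR₂, hS₂, and_self]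

variable {P Q : Finset V → Prop} {C D : Finset V} {m m' s s' : ℝ}

lemma hasContainers_of_card_le (P : Finset V → Prop) (hm : C.card ≤ m) (hs : 0 ≤ s) :
    HasContainers P C m s :=
  ⟨_, _, isFingerprint_const C, fun I _ => by simpa using ⟨hm, hs⟩⟩

lemma HasContainers.mono (h : HasContainers P C m s) (hQ : ∀ I, Q I → P I) (hm : m ≤ m')
    (hs : s ≤ s') : HasContainers Q C m' s' := by
  obtain ⟨R, S, hRS, hcont⟩ := h
  refine ⟨R, S, hRS, fun I hI => ?_⟩
  obtain ⟨hcover, hsub, hR, hS⟩ := hcont I (hQ I hI)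
  exact ⟨hcover, hsub, hR.trans hm, hS.trans hs⟩

lemma HasContainers.subset (h : HasContainers P C m s) (hD : D ⊆ C) : HasContainers P D m s := by
  obtain ⟨R, S, hRS, hcont⟩ := h
  refine ⟨_, S, hRS.inter D, fun I hI => ?_⟩
  obtain ⟨hcover, -, hR, hS⟩ := hcont I hI
  refine ⟨fun u hu => ?_, Finset.inter_subset_right, ?_, hS⟩
  · have := hcover (Finset.inter_subset_inter_left hD hu)
    simp only [Finset.mem_union, Finset.mem_inter] at this hu ⊢
    tauto
  · exact le_trans (by exact_mod_cast Finset.card_le_card Finset.inter_subset_left) hR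

lemma HasContainers.of_erase {v : V} {P₁ P₂ : Finset V → Prop}
    (h₁ : HasContainers P₁ (C.erase v) m (s - 1)) (h₂ : HasContainers P₂ (C.erase v) m s)
    (hP₁ : ∀ I, P I → v ∈ I → P₁ I) (hP₂ : ∀ I, P I → v ∉ I → P₂ I) : HasContainers P C m s := by
  obtain ⟨R₁, S₁, hRS₁, hcont₁⟩ := h₁
  obtain ⟨R₂, S₂, hRS₂, hcont₂⟩ := h₂
  refine ⟨_, _, hRS₁.ite_mem hRS₂ v, fun I hI => ?_⟩
  by_cases hv : v ∈ I
  · obtain ⟨hcover, hsub, hR, hS⟩ := hcont₁ I (hP₁ I hI hv)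
    simp only [hv, if_true]
    refine ⟨fun u hu => ?_, hsub.trans (Finset.erase_subset _ _), hR, ?_⟩
    · rcases eq_or_ne u v with rfl | huv
      · simp
      · have := @hcover u (by simp_all)
        simp only [Finset.mem_union, Finset.mem_insert] at this ⊢
        tauto
    · have : ((insert v (S₁ I)).card : ℝ) ≤ (S₁ I).card + 1 := by
        exact_mod_cast Finset.card_insert_le _ _
      linarith
  · obtain ⟨hcover, hsub, hR, hS⟩ := hcont₂ I (hP₂ I hI hv)
    simp only [hv, if_false]
    refine ⟨fun u hu => hcover ?_, hsub.trans (Finset.erase_subset _ _), hR, hS⟩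
    have huv : u ≠ v := fun h => hv (h ▸ (Finset.mem_inter.1 hu).1)
    simp_all

lemma HasContainers.bind (h : HasContainers P C m s)
    (h' : ∀ F ⊆ C, F.card ≤ m → HasContainers P F m' s') : HasContainers P C m' (s + s') := by
  obtain ⟨R, S, hRS, hcont⟩ := h
  have hF : ∀ F : Finset V, ∃ R S, IsFingerprint R S ∧ (F ⊆ C → F.card ≤ m → ∀ I, P I →
      I ∩ F ⊆ R I ∪ S I ∧ R I ⊆ F ∧ ((R I).card : ℝ) ≤ m' ∧ ((S I).card : ℝ) ≤ s') := by
    intro F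
    by_cases hF : F ⊆ C ∧ F.card ≤ m
    · obtain ⟨R, S, hRS, hcont⟩ := h' F hF.1 hF.2
      exact ⟨R, S, hRS, fun _ _ => hcont⟩
    · exact ⟨_, _, isFingerprint_const F, fun hFC hFm => absurd ⟨hFC, hFm⟩ hF⟩
  choose R' S' hRS' hcont' using hF
  refine ⟨_, _, hRS.bind hRS', fun I hI => ?_⟩
  obtain ⟨hcover, hsub, hR, hS⟩ := hcont I hI
  obtain ⟨hcover', hsub', hR', hS'⟩ := hcont' (R I) hsub hR I hI
  refine ⟨fun u hu => ?_, hsub'.trans hsub, hR', ?_⟩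
  · have hu' := hcover hu
    have hu'' := @hcover' u
    simp only [Finset.mem_union, Finset.mem_inter] at hu hu' hu'' ⊢
    tauto
  · have : ((S I ∪ S' (R I) I).card : ℝ) ≤ (S I).card + (S' (R I) I).card := by
      exact_mod_cast Finset.card_union_le _ _
    linarith

lemma hasContainers_iterate {t : ℝ} (hs : 0 ≤ s)
    (h : ∀ F ⊆ C, m < F.card → HasContainers P F (F.card - t) s) (j : ℕ) :
    HasContainers P C (max m (C.card - j * t)) (j * s) := by
  induction j with
  | zero => exact hasContainers_of_card_le P (by simp) (by simp)
  | succ j ih =>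
    rw [Nat.cast_succ, add_one_mul (j : ℝ) s]
    refine ih.bind fun F hF hcard => ?_
    rcases le_or_gt (F.card : ℝ) m with hFm | hFm
    · exact hasContainers_of_card_le P (hFm.trans (le_max_left _ _)) hs
    · refine (h F hF hFm).mono (fun _ => id) (le_max_of_le_right ?_) le_rfl
      have := (le_max_iff.1 hcard).resolve_left hFm.not_ge
      linarith

end Fingerprint

section Hypergraph

variable {V : Type*}

/-- `H` is a nonnegative weight function supported on the `r`-element subsets of `C`. -/
structure IsUniformOn (C : Finset V) (r : ℕ) (H : Finset V → ℝ) : Prop where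
  nonneg : ∀ e, 0 ≤ H e
  subset : ∀ e, H e ≠ 0 → e ⊆ C
  card_eq : ∀ e, H e ≠ 0 → e.card = r

lemma isUniformOn_zero (C : Finset V) (r : ℕ) : IsUniformOn C r (0 : Finset V → ℝ) :=
  ⟨fun _ => le_rfl, fun _ h => absurd rfl h, fun _ h => absurd rfl h⟩

variable [DecidableEq V]

/-- The total weight of the edges in `C` containing `σ`, in the hypergraph with edge weights `H`. -/
noncomputable def codegree (C : Finset V) (H : Finset V → ℝ) (σ : Finset V) : ℝ :=
  ∑ e ∈ C.powerset with σ ⊆ e, H e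

/-- The codegree condition of the container theorem at density `p`: the weight on a nonempty set
decreases by a factor of `p` with every further vertex. -/
def HasBoundedCodegrees (C : Finset V) (p B : ℝ) (H : Finset V → ℝ) : Prop :=
  ∀ σ : Finset V, σ.Nonempty → codegree C H σ ≤ B * p ^ (σ.card - 1)

/-- No edge of positive weight is contained in `I`. -/
def IsIndep (H : Finset V → ℝ) (I : Finset V) : Prop := ∀ e ⊆ I, H e = 0

/-- The hypergraph `H` without the edges that contain a member of `T`. -/
noncomputable def avoiding (T : Finset (Finset V)) (H : Finset V → ℝ) (e : Finset V) : ℝ :=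
  if ∃ σ ∈ T, σ ⊆ e then 0 else H e

variable {C : Finset V} {r : ℕ} {p B : ℝ} {G H W : Finset V → ℝ} {T : Finset (Finset V)}

lemma codegree_empty : codegree C H ∅ = ∑ e ∈ C.powerset, H e := by
  simp [codegree]

lemma codegree_nonneg (hH : ∀ e, 0 ≤ H e) (σ : Finset V) : 0 ≤ codegree C H σ :=
  Finset.sum_nonneg fun e _ => hH e

lemma codegree_mono (h : ∀ e, W e ≤ H e) (σ : Finset V) : codegree C W σ ≤ codegree C H σ :=
  Finset.sum_le_sum fun e _ => h e

lemma avoiding_nonneg (hH : ∀ e, 0 ≤ H e) (e : Finset V) : 0 ≤ avoiding T H e := by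
  unfold avoiding
  split_ifs
  exacts [le_rfl, hH e]

lemma avoiding_le (hH : ∀ e, 0 ≤ H e) (e : Finset V) : avoiding T H e ≤ H e := by
  unfold avoiding
  split_ifs
  exacts [hH e, le_rfl]

lemma IsUniformOn.avoiding (hH : IsUniformOn C r H) (T : Finset (Finset V)) :
    IsUniformOn C r (avoiding T H) := by
  have hne : ∀ e, SparseSzemeredi.avoiding T H e ≠ 0 → H e ≠ 0 := fun e he h0 =>
    he (le_antisymm (h0 ▸ avoiding_le hH.nonneg e) (avoiding_nonneg hH.nonneg e))
  exact ⟨avoiding_nonneg hH.nonneg, fun e he => hH.subset e (hne e he),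
    fun e he => hH.card_eq e (hne e he)⟩

lemma codegree_avoiding_eq_zero {σ τ : Finset V} (hσ : σ ∈ T) (hστ : σ ⊆ τ) :
    codegree C (avoiding T H) τ = 0 :=
  Finset.sum_eq_zero fun _ he =>
    if_pos ⟨σ, hσ, hστ.trans (Finset.mem_filter.1 he).2⟩

lemma codegree_empty_le_avoiding_add_sum (hH : ∀ e, 0 ≤ H e) (T : Finset (Finset V)) :
    codegree C H ∅ ≤ codegree C (avoiding T H) ∅ + ∑ σ ∈ T, codegree C H σ := by
  simp only [codegree, Finset.sum_filter, Finset.empty_subset, if_true]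
  rw [Finset.sum_comm, ← Finset.sum_add_distrib]
  refine Finset.sum_le_sum fun e _ => ?_
  have hnonneg : ∀ σ ∈ T, 0 ≤ if σ ⊆ e then H e else 0 := fun σ _ => by
    split_ifs
    exacts [hH e, le_rfl]
  unfold avoiding
  split_ifs with he
  · obtain ⟨σ, hσ, hσe⟩ := he
    simpa [hσe] using Finset.single_le_sum hnonneg hσ
  · linarith [Finset.sum_nonneg hnonneg]

lemma IsUniformOn.sum_codegree_le (hG : IsUniformOn C r G) :
    ∑ σ ∈ C.powerset, codegree C G σ ≤ 2 ^ r * codegree C G ∅ := by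
  rw [codegree_empty, Finset.mul_sum]
  simp only [codegree, Finset.sum_filter]
  rw [Finset.sum_comm]
  refine Finset.sum_le_sum fun e _ => ?_
  rw [← Finset.sum_filter, Finset.sum_const, nsmul_eq_mul]
  rcases eq_or_ne (G e) 0 with h0 | h0
  · simp [h0]
  · refine mul_le_mul_of_nonneg_right ?_ (hG.nonneg e)
    have hsub : {σ ∈ C.powerset | σ ⊆ e} ⊆ e.powerset := fun σ hσ =>
      Finset.mem_powerset.2 (Finset.mem_filter.1 hσ).2
    have := Finset.card_le_card hsub
    rw [Finset.card_powerset, hG.card_eq e h0] at this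
    exact_mod_cast this

lemma IsUniformOn.codegree_empty_le_sum_singleton (hW : IsUniformOn C (r + 1) W) :
    codegree C W ∅ ≤ ∑ v ∈ C, codegree C W {v} := by
  rw [codegree_empty]
  simp only [codegree, Finset.sum_filter]
  rw [Finset.sum_comm]
  refine Finset.sum_le_sum fun e he => ?_
  rcases eq_or_ne (W e) 0 with h0 | h0
  · simp [h0]
  · obtain ⟨v, hv⟩ := Finset.card_pos.1 ((hW.card_eq e h0).symm ▸ r.succ_pos : 0 < e.card)
    simpa [hv] using Finset.single_le_sum (f := fun v => if {v} ⊆ e then W e else 0)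
      (fun u _ => by split_ifs; exacts [hW.nonneg e, le_rfl]) (Finset.mem_powerset.1 he hv)

lemma IsUniformOn.exists_le_codegree_singleton (hW : IsUniformOn C (r + 1) W) {γ N : ℝ}
    (hγ : 0 < γ) (hN : 0 < N) (hCN : C.card ≤ N) (h : γ * N ≤ codegree C W ∅) :
    ∃ v ∈ C, γ ≤ codegree C W {v} := by
  have hsum := h.trans hW.codegree_empty_le_sum_singleton
  rcases C.eq_empty_or_nonempty with rfl | hC
  · simp only [Finset.sum_empty] at hsum
    exact absurd hsum (mul_pos hγ hN).not_ge
  · refine Finset.exists_le_of_sum_le hC ?_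
    rw [Finset.sum_const, nsmul_eq_mul, mul_comm]
    exact le_trans (by gcongr) hsum

end Hypergraph

section ContainerStep

variable {V : Type*} [DecidableEq V]

/-- `G` together with `p⁻¹` times the link of `v` in `W`. -/
noncomputable def addLink (p : ℝ) (G W : Finset V → ℝ) (v : V) (f : Finset V) : ℝ :=
  G f + p⁻¹ * if v ∈ f then 0 else W (insert v f)

/-- The sets that the next edges chosen from `H` have to avoid: the vertices of `C` outside `D`, and
the sets whose codegree in `G` has reached the bound `B`. -/
noncomputable def obstructions (C D : Finset V) (p B : ℝ) (G : Finset V → ℝ) :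
    Finset (Finset V) :=
  (C \ D).image singleton ∪
    {σ ∈ C.powerset | σ.Nonempty ∧ B * p ^ (σ.card - 1) ≤ codegree C G σ}

variable {C D : Finset V} {r : ℕ} {p B : ℝ} {G H W : Finset V → ℝ} {v : V}

lemma codegree_addLink_of_mem {σ : Finset V} (hv : v ∈ σ) :
    codegree C (addLink p G W v) σ = codegree C G σ :=
  Finset.sum_congr rfl fun e he => by simp [addLink, (Finset.mem_filter.1 he).2 hv]

lemma codegree_addLink_of_notMem (hvC : v ∈ C) {σ : Finset V} (hv : v ∉ σ) :
    codegree C (addLink p G W v) σ = codegree C G σ + p⁻¹ * codegree C W (insert v σ) := by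
  have hlink : ∑ f ∈ C.powerset with σ ⊆ f, (if v ∈ f then 0 else W (insert v f)) =
      codegree C W (insert v σ) := by
    simp only [← ite_not (p := v ∈ _)]
    rw [← Finset.sum_filter, Finset.filter_filter]
    refine Finset.sum_nbij' (insert v) (Finset.erase · v) ?_ ?_ ?_ ?_ fun _ _ => rfl <;>
      intro e he <;> simp only [Finset.mem_filter, Finset.mem_powerset] at he ⊢
    · exact ⟨Finset.insert_subset hvC he.1, Finset.insert_subset_insert _ he.2.1⟩
    · exact ⟨(Finset.erase_subset _ _).trans he.1,
        Finset.subset_erase.2 ⟨(Finset.subset_insert _ _).trans he.2, hv⟩, Finset.notMem_erase _ _⟩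
    · exact Finset.erase_insert he.2.2
    · exact Finset.insert_erase (he.2 (Finset.mem_insert_self _ _))
  rw [← hlink]
  simp only [codegree, addLink, Finset.sum_add_distrib, Finset.mul_sum]

lemma IsUniformOn.addLink (hG : IsUniformOn C r G) (hW : IsUniformOn C (r + 1) W) (hp : 0 ≤ p)
    (v : V) : IsUniformOn C r (addLink p G W v) := by
  have hne : ∀ f, SparseSzemeredi.addLink p G W v f ≠ 0 →
      G f ≠ 0 ∨ v ∉ f ∧ W (insert v f) ≠ 0 := by
    intro f hf
    by_contra! h
    by_cases hv : v ∈ f <;> simp_all [SparseSzemeredi.addLink]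
  refine ⟨fun f => ?_, fun f hf => ?_, fun f hf => ?_⟩
  · have := hG.nonneg f
    have := hW.nonneg (insert v f)
    unfold SparseSzemeredi.addLink
    positivity
  · rcases hne f hf with h | ⟨-, h⟩
    · exact hG.subset f h
    · exact (Finset.subset_insert _ _).trans (hW.subset _ h)
  · rcases hne f hf with h | ⟨hv, h⟩
    · exact hG.card_eq f h
    · simpa [Finset.card_insert_of_notMem hv] using hW.card_eq _ h

lemma IsIndep.addLink {I : Finset V} (hG : IsIndep G I) (hW : IsIndep W I) (hv : v ∈ I) :
    IsIndep (addLink p G W v) I := by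
  intro f hf
  simp [SparseSzemeredi.addLink, hG f hf, hW _ (Finset.insert_subset hv hf)]

lemma IsIndep.avoiding {I : Finset V} (hH : IsIndep H I) (T : Finset (Finset V)) :
    IsIndep (avoiding T H) I := by
  intro e he
  simp [SparseSzemeredi.avoiding, hH e he]

lemma HasBoundedCodegrees.addLink_avoiding (hG : HasBoundedCodegrees C p (2 * B) G)
    (hH : HasBoundedCodegrees C p B H) (hH0 : ∀ e, 0 ≤ H e) (hp : 0 < p) (hv : v ∈ C) :
    HasBoundedCodegrees C p (2 * B)
      (addLink p G (avoiding (obstructions C D p B G) H) v) := by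
  intro σ hσ
  by_cases hvσ : v ∈ σ
  · rw [codegree_addLink_of_mem hvσ]
    exact hG σ hσ
  rw [codegree_addLink_of_notMem hv hvσ]
  rcases le_or_gt (B * p ^ (σ.card - 1)) (codegree C G σ) with hsat | hsat
  · have hzero : codegree C (avoiding (obstructions C D p B G) H) (insert v σ) = 0 := by
      by_cases hσC : σ ⊆ C
      · exact codegree_avoiding_eq_zero (σ := σ) (by simp [obstructions, hσC, hσ, hsat])
          (Finset.subset_insert _ _)
      · refine Finset.sum_eq_zero fun e he => absurd ?_ hσC
        simp only [Finset.mem_filter, Finset.mem_powerset] at he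
        exact (Finset.subset_insert _ _).trans (he.2.trans he.1)
    rw [hzero, mul_zero, add_zero]
    exact hG σ hσ
  · have hlink : p⁻¹ * codegree C (avoiding (obstructions C D p B G) H) (insert v σ) ≤
        B * p ^ (σ.card - 1) := by
      have hle := (codegree_mono (avoiding_le (T := obstructions C D p B G) hH0) (insert v σ)).trans
        (hH _ (Finset.insert_nonempty v σ))
      rw [Finset.card_insert_of_notMem hvσ, Nat.add_sub_cancel] at hle
      rw [inv_mul_le_iff₀ hp, mul_left_comm, mul_pow_sub_one hσ.card_pos.ne']
      exact hle
    linarith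

lemma sum_obstructions_codegree_le (hD : D ⊆ C) (hH0 : ∀ e, 0 ≤ H e)
    (hH : HasBoundedCodegrees C p B H) (hG : IsUniformOn C r G) :
    ∑ σ ∈ obstructions C D p B G, codegree C H σ ≤
      (C.card - D.card) * B + 2 ^ r * codegree C G ∅ := by
  have hvertices : ∑ σ ∈ (C \ D).image singleton, codegree C H σ ≤ (C.card - D.card) * B := by
    refine (Finset.sum_le_card_nsmul _ _ B ?_).trans ?_
    · simp only [Finset.mem_image]
      rintro _ ⟨z, -, rfl⟩
      simpa using hH {z} (Finset.singleton_nonempty z)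
    · rw [nsmul_eq_mul, Finset.card_image_of_injective _ Finset.singleton_injective,
        Finset.card_sdiff_of_subset hD, Nat.cast_sub (Finset.card_le_card hD)]
  have hsaturated : ∑ σ ∈ C.powerset with σ.Nonempty ∧ B * p ^ (σ.card - 1) ≤ codegree C G σ,
      codegree C H σ ≤ 2 ^ r * codegree C G ∅ :=
    calc _ ≤ ∑ σ ∈ C.powerset with σ.Nonempty ∧ B * p ^ (σ.card - 1) ≤ codegree C G σ,
          codegree C G σ := Finset.sum_le_sum fun σ hσ =>
            (hH σ (Finset.mem_filter.1 hσ).2.1).trans (Finset.mem_filter.1 hσ).2.2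
      _ ≤ ∑ σ ∈ C.powerset, codegree C G σ := Finset.sum_le_sum_of_subset_of_nonneg
          (Finset.filter_subset _ _) fun σ _ _ => codegree_nonneg hG.nonneg σ
      _ ≤ _ := hG.sum_codegree_le
  have hunion := Finset.sum_union_inter (s₁ := (C \ D).image singleton)
    (s₂ := {σ ∈ C.powerset | σ.Nonempty ∧ B * p ^ (σ.card - 1) ≤ codegree C G σ})
    (f := codegree C H)
  have hinter : 0 ≤ ∑ σ ∈ (C \ D).image singleton ∩
      {σ ∈ C.powerset | σ.Nonempty ∧ B * p ^ (σ.card - 1) ≤ codegree C G σ}, codegree C H σ :=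
    Finset.sum_nonneg fun σ _ => codegree_nonneg hH0 σ
  unfold obstructions
  linarith

variable {N β β' c b : ℝ}

lemma exists_popular_vertex (hN : 0 < N) (hCN : C.card ≤ N) (hβ : 0 < β) (hB : 0 ≤ B)
    (hc : c * B ≤ β / 4) (hβ' : 2 ^ r * β' ≤ β / 4) (hH : IsUniformOn C (r + 1) H)
    (hHdense : β * N ≤ codegree C H ∅) (hHB : HasBoundedCodegrees C p B H)
    (hG : IsUniformOn C r G) (hGsparse : codegree C G ∅ ≤ β' * N) (hD : D ⊆ C)
    (hDcard : C.card - c * N ≤ D.card) :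
    ∃ v ∈ D, β / 2 ≤ codegree C (avoiding (obstructions C D p B G) H) {v} := by
  have htotal := codegree_empty_le_avoiding_add_sum (C := C) hH.nonneg (obstructions C D p B G)
  have hsum := sum_obstructions_codegree_le hD hH.nonneg hHB hG
  have hout : (C.card - D.card) * B ≤ β / 4 * N :=
    calc (C.card - D.card) * B ≤ c * N * B := by gcongr; linarith
      _ = c * B * N := by ring
      _ ≤ β / 4 * N := by gcongr
  have hsat : 2 ^ r * codegree C G ∅ ≤ β / 4 * N :=
    calc 2 ^ r * codegree C G ∅ ≤ 2 ^ r * (β' * N) := by gcongr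
      _ = 2 ^ r * β' * N := by ring
      _ ≤ β / 4 * N := by gcongr
  obtain ⟨v, hvC, hv⟩ := (hH.avoiding (obstructions C D p B G)).exists_le_codegree_singleton
    (half_pos hβ) hN hCN (by linarith)
  refine ⟨v, ?_, hv⟩
  by_contra hvD
  have hzero := codegree_avoiding_eq_zero (C := C) (T := obstructions C D p B G) (H := H)
    (σ := {v}) (by simp [obstructions, hvC, hvD]) subset_rfl
  linarith

/- The weight of `G` grows by at least `β / (2 * p)` each time a vertex joins the fingerprint, and
`G` is handed over to `hlink` as soon as its weight exceeds `β' * N`. -/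
lemma hasContainers_of_hasContainers_link (hN : 0 < N) (hCN : C.card ≤ N) (hp : 0 < p)
    (hB : 0 ≤ B) (hβ : 0 < β) (hb : 0 ≤ b) (hc : c * B ≤ β / 4) (hβ' : 2 ^ r * β' ≤ β / 4)
    (hH : IsUniformOn C (r + 1) H) (hHdense : β * N ≤ codegree C H ∅)
    (hHB : HasBoundedCodegrees C p B H)
    (hlink : ∀ G, IsUniformOn C r G → β' * N ≤ codegree C G ∅ →
      HasBoundedCodegrees C p (2 * B) G → HasContainers (IsIndep G) C (C.card - c * N) b)
    (hD : D ⊆ C) (hG : IsUniformOn C r G) (hGB : HasBoundedCodegrees C p (2 * B) G)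
    (hGle : codegree C G ∅ ≤ β' * N + B / p) :
    HasContainers (fun I => IsIndep H I ∧ IsIndep G I) D (C.card - c * N)
      ((β' * N + B / p - codegree C G ∅) * (2 * p / β) + b) := by
  induction D using Finset.strongInduction generalizing G with
  | H D ih =>
  have hbudget : 0 ≤ (β' * N + B / p - codegree C G ∅) * (2 * p / β) :=
    mul_nonneg (by linarith) (by positivity)
  rcases le_or_gt (D.card : ℝ) (C.card - c * N) with hsmall | hDcard
  · exact hasContainers_of_card_le _ hsmall (by positivity)
  rcases le_or_gt (β' * N) (codegree C G ∅) with hdense | hsparse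
  · exact ((hlink G hG hdense hGB).subset hD).mono (fun _ h => h.2) le_rfl (by linarith)
  obtain ⟨v, hvD, hv⟩ := exists_popular_vertex hN hCN hβ hB hc hβ' hH hHdense hHB hG hsparse.le hD
    hDcard.le
  set W := avoiding (obstructions C D p B G) H
  have hvB : p⁻¹ * codegree C W {v} ≤ B / p := by
    have hle := (codegree_mono (avoiding_le (T := obstructions C D p B G) hH.nonneg) {v}).trans
      (hHB _ (Finset.singleton_nonempty v))
    rw [inv_mul_eq_div]
    gcongr
    simpa using hle
  have hweight : codegree C (addLink p G W v) ∅ = codegree C G ∅ + p⁻¹ * codegree C W {v} :=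
    codegree_addLink_of_notMem (hD hvD) (Finset.notMem_empty v)
  have hgain : 1 ≤ p⁻¹ * codegree C W {v} * (2 * p / β) := by
    have : p⁻¹ * codegree C W {v} * (2 * p / β) = codegree C W {v} / (β / 2) := by field_simp
    rwa [this, one_le_div (half_pos hβ)]
  have herase : D.erase v ⊂ D := Finset.erase_ssubset hvD
  have hin := ih _ herase (herase.1.trans hD) (hG.addLink (hH.avoiding _) hp.le v)
    (hGB.addLink_avoiding (D := D) hHB hH.nonneg hp (hD hvD)) (by rw [hweight]; linarith)
  have hout := ih _ herase (herase.1.trans hD) hG hGB hGle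
  refine (hin.mono (fun _ => id) le_rfl ?_).of_erase hout
    (fun I hI hvI => ⟨hI.1, hI.2.addLink (hI.1.avoiding _) hvI⟩) fun I hI _ => hI
  rw [hweight]
  linarith

lemma hasBoundedCodegrees_zero (C : Finset V) (hp : 0 ≤ p) (hB : 0 ≤ B) :
    HasBoundedCodegrees C p B 0 :=
  fun σ _ => by simpa [codegree] using by positivity

lemma IsUniformOn.not_isIndep (hH : IsUniformOn C 0 H) (hpos : 0 < codegree C H ∅)
    (I : Finset V) : ¬ IsIndep H I := by
  intro hI
  obtain ⟨e, -, he⟩ := Finset.exists_ne_zero_of_sum_ne_zero hpos.ne'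
  obtain rfl := Finset.card_eq_zero.1 (hH.card_eq e he)
  exact he (hI ∅ (Finset.empty_subset I))

variable (V) in
theorem exists_hasContainers (r : ℕ) {β B : ℝ} (hβ : 0 < β) (hB : 0 < B) :
    ∃ c b : ℝ, 0 < c ∧ 0 < b ∧ ∀ (C : Finset V) (N p : ℝ), C.card ≤ N → 0 < p → 1 ≤ p * N →
      ∀ H, IsUniformOn C r H → β * N ≤ codegree C H ∅ → HasBoundedCodegrees C p B H →
        HasContainers (IsIndep H) C (C.card - c * N) (b * (p * N)) := by
  induction r generalizing β B with
  | zero =>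
    refine ⟨1, 1, one_pos, one_pos, fun C N p _ hp hpN H hH hHdense _ => ?_⟩
    have hN : 0 < N := pos_of_mul_pos_right (one_pos.trans_le hpN) hp.le
    have hpos : 0 < codegree C H ∅ := lt_of_lt_of_le (by positivity) hHdense
    exact ⟨_, _, isFingerprint_const ∅, fun I hI => absurd hI (hH.not_isIndep hpos I)⟩
  | succ r ih =>
    set β' := β / 4 / 2 ^ r
    obtain ⟨c₀, b₀, hc₀, hb₀, hlink⟩ := ih (β := β') (B := 2 * B) (by positivity) (by positivity)
    set c := min c₀ (β / 4 / B)
    refine ⟨c, (β' + B) * (2 / β) + b₀, by positivity, by positivity,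
      fun C N p hCN hp hpN H hH hHdense hHB => ?_⟩
    have hN : 0 < N := pos_of_mul_pos_right (one_pos.trans_le hpN) hp.le
    have hzero : codegree C 0 ∅ = 0 := by simp [codegree]
    have hβ'le : 2 ^ r * β' ≤ β / 4 := (mul_div_cancel₀ (β / 4) (by positivity)).le
    have hcont := hasContainers_of_hasContainers_link (b := b₀ * (p * N)) (c := c) hN hCN
      hp hB.le hβ (by positivity) ((le_div_iff₀ hB).1 (min_le_right _ _)) hβ'le hH hHdense hHB
      (fun G hG hGdense hGB => (hlink C N p hCN hp hpN G hG hGdense hGB).mono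
        (fun _ => id) (by gcongr; exact min_le_left _ _) le_rfl) subset_rfl (isUniformOn_zero C r)
      (hasBoundedCodegrees_zero C hp.le (by positivity)) (by rw [hzero]; positivity)
    refine hcont.mono (fun I hI => ⟨hI, fun _ _ => rfl⟩) le_rfl ?_
    have hsplit : (β' * N + B / p - 0) * (2 * p / β) =
        β' * (2 / β) * (p * N) + B * (2 / β) * 1 := by field_simp; ring
    have hone : B * (2 / β) * 1 ≤ B * (2 / β) * (p * N) := by gcongr
    rw [hzero, hsplit]
    linarith

end ContainerStep

/-! ### Containers for progression-free sets -/

section ProgressionHypergraph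

/-- The set of terms of the `k`-term progression with first term `q.1` and difference `q.2`. -/
def terms (k : ℕ) (q : ℕ × ℕ) : Finset ℕ := (Finset.range k).image fun i => q.1 + i * q.2

/-- The hypergraph of the `k`-term progressions in `C ⊆ {1, …, n}`. Each progression has weight
`1 / n`, which makes the degrees of the vertices bounded. -/
noncomputable def progressionHypergraph (n k : ℕ) (C e : Finset ℕ) : ℝ :=
  (n : ℝ)⁻¹ * {q ∈ progressions n k C | terms k q = e}.card

/-- `I` contains no `k`-term progression with positive first term and difference. -/
def IsProgressionFree (k : ℕ) (I : Finset ℕ) : Prop :=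
  ¬ ∃ a d : ℕ, 0 < a ∧ 0 < d ∧ ∀ i < k, a + i * d ∈ I

variable {n k : ℕ} {C : Finset ℕ} {q : ℕ × ℕ}

lemma mem_terms {v : ℕ} : v ∈ terms k q ↔ ∃ i < k, q.1 + i * q.2 = v := by
  simp [terms]

lemma fst_pos_of_mem_progressions (hq : q ∈ progressions n k C) : 0 < q.1 := by
  simp only [progressions, Finset.mem_filter, Finset.mem_product, Finset.mem_Icc] at hq
  exact hq.1.1.1

lemma snd_mem_Icc_of_mem_progressions (hq : q ∈ progressions n k C) : q.2 ∈ Finset.Icc 1 n := by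
  simp only [progressions, Finset.mem_filter, Finset.mem_product] at hq
  exact hq.1.2

lemma terms_subset (hq : q ∈ progressions n k C) : terms k q ⊆ C := by
  intro v hv
  obtain ⟨i, hi, rfl⟩ := mem_terms.1 hv
  exact (Finset.mem_filter.1 hq).2 i hi

lemma card_terms (hq : 0 < q.2) : (terms k q).card = k := by
  rw [terms, Finset.card_image_of_injective, Finset.card_range]
  exact fun i j hij => Nat.eq_of_mul_eq_mul_right hq (Nat.add_left_cancel hij)

lemma exists_terms_eq {e : Finset ℕ} (he : progressionHypergraph n k C e ≠ 0) :
    ∃ q ∈ progressions n k C, terms k q = e := by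
  by_contra! h
  refine he ?_
  rw [progressionHypergraph, Finset.filter_false_of_mem h, Finset.card_empty, Nat.cast_zero,
    mul_zero]

lemma isUniformOn_progressionHypergraph (n k : ℕ) (C : Finset ℕ) :
    IsUniformOn C k (progressionHypergraph n k C) where
  nonneg e := by unfold progressionHypergraph; positivity
  subset e he := by
    obtain ⟨q, hq, rfl⟩ := exists_terms_eq he
    exact terms_subset hq
  card_eq e he := by
    obtain ⟨q, hq, rfl⟩ := exists_terms_eq he
    exact card_terms (Finset.mem_Icc.1 (snd_mem_Icc_of_mem_progressions hq)).1

lemma IsProgressionFree.isIndep {I : Finset ℕ} (hI : IsProgressionFree k I) (n : ℕ)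
    (C : Finset ℕ) : IsIndep (progressionHypergraph n k C) I := by
  intro e he
  by_contra hne
  obtain ⟨q, hq, rfl⟩ := exists_terms_eq hne
  exact hI ⟨q.1, q.2, fst_pos_of_mem_progressions hq,
    (Finset.mem_Icc.1 (snd_mem_Icc_of_mem_progressions hq)).1,
    fun i hi => he (mem_terms.2 ⟨i, hi, rfl⟩)⟩

lemma codegree_progressionHypergraph (n k : ℕ) (C σ : Finset ℕ) :
    codegree C (progressionHypergraph n k C) σ =
      (n : ℝ)⁻¹ * {q ∈ progressions n k C | σ ⊆ terms k q}.card := by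
  simp only [codegree, progressionHypergraph]
  rw [← Finset.mul_sum, Finset.card_eq_sum_card_fiberwise (f := terms k)
    (t := {e ∈ C.powerset | σ ⊆ e})]
  · push_cast
    congr 1
    refine Finset.sum_congr rfl fun e he => ?_
    rw [Finset.filter_filter]
    congr 2
    refine Finset.filter_congr fun q _ => (and_iff_right_of_imp ?_).symm
    rintro rfl
    exact (Finset.mem_filter.1 he).2
  · intro q hq
    simp only [Finset.coe_filter, Set.mem_ofPred_eq, Finset.mem_powerset] at hq ⊢
    exact ⟨terms_subset hq.1, hq.2⟩

lemma card_progressions_mem_le (n k : ℕ) (C : Finset ℕ) (v : ℕ) :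
    {q ∈ progressions n k C | v ∈ terms k q}.card ≤ k * n := by
  have hcover : {q ∈ progressions n k C | v ∈ terms k q} ⊆
      (Finset.range k).biUnion fun i => {q ∈ progressions n k C | q.1 + i * q.2 = v} := by
    intro q hq
    simp only [Finset.mem_filter, mem_terms, Finset.mem_biUnion, Finset.mem_range] at hq ⊢
    obtain ⟨hq, i, hi, hiv⟩ := hq
    exact ⟨i, hi, hq, hiv⟩
  have hfiber : ∀ i, {q ∈ progressions n k C | q.1 + i * q.2 = v}.card ≤
      (Finset.Icc 1 n).card := by
    refine fun i => Finset.card_le_card_of_injOn Prod.snd (fun q hq =>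
      snd_mem_Icc_of_mem_progressions (Finset.mem_filter.1 hq).1) fun q hq r hr h => ?_
    have hq := (Finset.mem_filter.1 hq).2
    have hr := (Finset.mem_filter.1 hr).2
    rw [h] at hq
    exact Prod.ext (Nat.add_right_cancel (hq.trans hr.symm)) h
  calc _ ≤ _ := Finset.card_le_card hcover
    _ ≤ (Finset.range k).card * (Finset.Icc 1 n).card :=
      Finset.card_biUnion_le_card_mul _ _ _ fun i _ => hfiber i
    _ = k * n := by simp

lemma eq_of_two_terms_eq {i j u v : ℕ} {q r : ℕ × ℕ} (huv : u ≠ v) (hqu : q.1 + i * q.2 = u)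
    (hqv : q.1 + j * q.2 = v) (hru : r.1 + i * r.2 = u) (hrv : r.1 + j * r.2 = v) : q = r := by
  have hij : (i : ℤ) - j ≠ 0 := fun h => huv <| by
    rw [← hqu, ← hqv, show i = j by omega]
  zify at hqu hqv hru hrv
  have hsnd : (q.2 : ℤ) = r.2 := mul_left_cancel₀ hij (by linear_combination hqu - hqv - hru + hrv)
  have hfst : (q.1 : ℤ) = r.1 := by linear_combination hqu - hru - i * hsnd
  exact Prod.ext (by exact_mod_cast hfst) (by exact_mod_cast hsnd)

lemma card_progressions_two_mem_le (n k : ℕ) (C : Finset ℕ) {u v : ℕ} (huv : u ≠ v) :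
    {q ∈ progressions n k C | u ∈ terms k q ∧ v ∈ terms k q}.card ≤ k ^ 2 := by
  have hcover : {q ∈ progressions n k C | u ∈ terms k q ∧ v ∈ terms k q} ⊆
      (Finset.range k ×ˢ Finset.range k).biUnion fun ij =>
        {q ∈ progressions n k C | q.1 + ij.1 * q.2 = u ∧ q.1 + ij.2 * q.2 = v} := by
    intro q hq
    simp only [Finset.mem_filter, mem_terms, Finset.mem_biUnion, Finset.mem_product,
      Finset.mem_range] at hq ⊢
    obtain ⟨hq, ⟨i, hi, hiu⟩, j, hj, hjv⟩ := hq
    exact ⟨(i, j), ⟨hi, hj⟩, hq, hiu, hjv⟩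
  calc _ ≤ _ := Finset.card_le_card hcover
    _ ≤ (Finset.range k ×ˢ Finset.range k).card * 1 :=
      Finset.card_biUnion_le_card_mul _ _ _ fun ij _ => Finset.card_le_one.2 fun q hq r hr => by
        obtain ⟨-, hqu, hqv⟩ := Finset.mem_filter.1 hq
        obtain ⟨-, hru, hrv⟩ := Finset.mem_filter.1 hr
        exact eq_of_two_terms_eq huv hqu hqv hru hrv
    _ = k ^ 2 := by simp [sq]

lemma hasBoundedCodegrees_progressionHypergraph (C : Finset ℕ) {p : ℝ} (hp : 0 < p) (hp1 : p ≤ 1)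
    (hpn : p ^ (k - 1) * n = 1) :
    HasBoundedCodegrees C p (k ^ 2) (progressionHypergraph n k C) := by
  intro σ hσ
  have hninv : (n : ℝ)⁻¹ = p ^ (k - 1) := (eq_inv_of_mul_eq_one_left hpn).symm
  have hn : (0 : ℝ) < n := inv_pos.1 (hninv ▸ by positivity)
  rw [codegree_progressionHypergraph]
  rcases (Nat.one_le_iff_ne_zero.2 hσ.card_ne_zero).eq_or_lt with hone | htwo
  · obtain ⟨v, rfl⟩ := Finset.card_eq_one.1 hone.symm
    simp only [Finset.singleton_subset_iff, Finset.card_singleton, Nat.sub_self, pow_zero, mul_one]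
    rw [inv_mul_le_iff₀ hn, mul_comm]
    have hle : k * n ≤ k ^ 2 * n := Nat.mul_le_mul_right n (Nat.le_self_pow two_ne_zero k)
    exact_mod_cast (card_progressions_mem_le n k C v).trans hle
  rcases le_or_gt σ.card k with hle | hlt
  · obtain ⟨u, hu, v, hv, huv⟩ := Finset.one_lt_card.1 htwo
    have hcount : {q ∈ progressions n k C | σ ⊆ terms k q}.card ≤ k ^ 2 :=
      (Finset.card_le_card (Finset.monotone_filter_right _ fun q _ hq => ⟨hq hu, hq hv⟩)).trans
        (card_progressions_two_mem_le n k C huv)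
    rw [hninv, mul_comm]
    gcongr ?_ * ?_
    · exact_mod_cast hcount
    · exact pow_le_pow_of_le_one hp.le hp1 (by omega)
  · rw [Finset.filter_false_of_mem fun q hq hsub => ?_]
    · simpa using by positivity
    · have hcard := Finset.card_le_card hsub
      rw [card_terms (Finset.mem_Icc.1 (snd_mem_Icc_of_mem_progressions hq)).1] at hcard
      omega

theorem exists_hasContainers_isProgressionFree (hk : 2 ≤ k) {δ : ℝ} (hδ : 0 < δ) :
    ∃ M : ℝ, 0 < M ∧ ∀ᶠ n : ℕ in Filter.atTop, ∀ p : ℝ, 0 < p → p ≤ 1 → p ^ (k - 1) * n = 1 →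
      HasContainers (IsProgressionFree k) (Finset.Icc 1 n) (δ * n) (M * (p * n)) := by
  obtain ⟨β, hβ, hmany⟩ := exists_mul_sq_le_card_progressions (k := k) (by omega) hδ
  obtain ⟨c, b, hc, hb, hcont⟩ := exists_hasContainers ℕ k (B := k ^ 2) hβ (by positivity)
  have : 0 < ⌈1 / c⌉₊ := Nat.ceil_pos.2 (by positivity)
  refine ⟨⌈1 / c⌉₊ * b, by positivity, ?_⟩
  filter_upwards [hmany, Filter.eventually_gt_atTop 0] with n hmany hn p hp hp1 hpn
  have hpn1 : 1 ≤ p * n := by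
    rw [← hpn]
    gcongr
    exact pow_le_of_le_one hp.le hp1 (by omega)
  have hstep : ∀ F ⊆ Finset.Icc 1 n, δ * n < F.card →
      HasContainers (IsProgressionFree k) F (F.card - c * n) (b * (p * n)) := by
    intro F hF hFcard
    have hdense : β * n ≤ codegree F (progressionHypergraph n k F) ∅ := by
      rw [codegree_progressionHypergraph, le_inv_mul_iff₀ (by positivity)]
      simpa [sq, mul_left_comm] using hmany F hF hFcard.le
    exact (hcont F n p (by simpa using Finset.card_le_card hF) hp hpn1 _
      (isUniformOn_progressionHypergraph n k F) hdense
      (hasBoundedCodegrees_progressionHypergraph F hp hp1 hpn)).mono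
      (fun I hI => hI.isIndep n F) le_rfl le_rfl
  refine (hasContainers_iterate (by positivity) hstep ⌈1 / c⌉₊).mono (fun _ => id)
    (max_le le_rfl ?_) (by rw [mul_assoc])
  have hexhaust : n ≤ ⌈1 / c⌉₊ * (c * n) := by
    rw [← mul_assoc]
    exact le_mul_of_one_le_left n.cast_nonneg ((div_le_iff₀ hc).1 (Nat.le_ceil _))
  have : 0 ≤ δ * n := by positivity
  simp only [Nat.card_Icc, Nat.add_sub_cancel]
  linarith

end ProgressionHypergraph

/-! ### Random subsets -/

section RandomSubset

variable {α : Type*}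

/-- The probability that the `p`-random subset of `V` is equal to `A`, for `A ⊆ V`. -/
noncomputable def subsetWeight (V : Finset α) (p : ℝ) (A : Finset α) : ℝ :=
  p ^ A.card * (1 - p) ^ (V.card - A.card)

/-- The probability that the `p`-random subset of `V` satisfies `P`. -/
noncomputable def subsetProb (V : Finset α) (p : ℝ) (P : Finset α → Prop) : ℝ :=
  ∑ A ∈ V.powerset with P A, subsetWeight V p A

lemma randomSubsetProb_eq_subsetProb (n : ℕ) (p : ℝ) (P : Finset ℕ → Prop) :
    randomSubsetProb n p P = subsetProb (Finset.Icc 1 n) p P := by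
  simp only [randomSubsetProb, subsetProb, subsetWeight, Finset.sum_filter, Nat.card_Icc,
    Nat.add_sub_cancel]

variable {V S T : Finset α} {p : ℝ}

lemma subsetWeight_nonneg (hp : p ∈ Set.Icc 0 1) (A : Finset α) : 0 ≤ subsetWeight V p A :=
  mul_nonneg (pow_nonneg hp.1 _) (pow_nonneg (sub_nonneg.2 hp.2) _)

lemma prod_mul_prod_sdiff_eq_subsetWeight_mul [DecidableEq α] {A : Finset α}
    (hS : S ⊆ V) (hA : A ⊆ V) (x : ℝ) :
    (∏ i ∈ A, p * if i ∈ T then x else 1) * ∏ i ∈ V \ A, (if i ∈ S then 0 else 1 - p) =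
      subsetWeight V p A * if S ⊆ A then x ^ (A ∩ T).card else 0 := by
  rw [Finset.prod_mul_distrib, Finset.prod_ite_mem]
  simp only [Finset.prod_const]
  split_ifs with hSA
  · have hout : ∏ i ∈ V \ A, (if i ∈ S then 0 else 1 - p) = (1 - p) ^ (V.card - A.card) := by
      rw [Finset.prod_congr rfl fun i hi => if_neg fun h => (Finset.mem_sdiff.1 hi).2 (hSA h),
        Finset.prod_const, Finset.card_sdiff_of_subset hA]
    rw [hout, subsetWeight]
    ring
  · obtain ⟨i, hiS, hiA⟩ := Finset.not_subset.1 hSA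
    have hout : ∏ i ∈ V \ A, (if i ∈ S then 0 else 1 - p) = 0 :=
      Finset.prod_eq_zero (Finset.mem_sdiff.2 ⟨hS hiS, hiA⟩) (if_pos hiS)
    rw [hout, mul_zero, mul_zero]

-- Expanding `∏ i ∈ V, (p * x_i + (1 - p) * y_i)`, with `x_i = x` on `T` and `y_i = 0` on `S`.
lemma sum_subsetWeight_mul [DecidableEq α] (hS : S ⊆ V) (hT : T ⊆ V) (hST : Disjoint S T)
    (p x : ℝ) :
    ∑ A ∈ V.powerset, subsetWeight V p A * (if S ⊆ A then x ^ (A ∩ T).card else 0) =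
      p ^ S.card * (1 + (x - 1) * p) ^ T.card := by
  have hfactor : ∀ i, (p * if i ∈ T then x else 1) + (if i ∈ S then 0 else 1 - p) =
      (if i ∈ S then p else 1) * if i ∈ T then 1 + (x - 1) * p else 1 := by
    intro i
    by_cases hiS : i ∈ S
    · simp [hiS, Finset.disjoint_left.1 hST hiS]
    · by_cases hiT : i ∈ T <;> simp only [hiS, hiT, if_true, if_false] <;> ring
  calc _ = ∏ i ∈ V, ((p * if i ∈ T then x else 1) + if i ∈ S then 0 else 1 - p) := by
        rw [Finset.prod_add]
        exact Finset.sum_congr rfl fun A hA =>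
          (prod_mul_prod_sdiff_eq_subsetWeight_mul hS (Finset.mem_powerset.1 hA) x).symm
    _ = _ := by
        rw [Finset.prod_congr rfl fun i _ => hfactor i, Finset.prod_mul_distrib,
          Finset.prod_ite_mem, Finset.prod_ite_mem, Finset.inter_eq_right.2 hS,
          Finset.inter_eq_right.2 hT, Finset.prod_const, Finset.prod_const]

lemma sum_subsetWeight (V : Finset α) (p : ℝ) : ∑ A ∈ V.powerset, subsetWeight V p A = 1 := by
  simpa using sum_subsetWeight_mul (Finset.empty_subset V) (Finset.empty_subset V)
    (Finset.disjoint_empty_left _) p 1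

lemma subsetProb_le_one (hp : p ∈ Set.Icc 0 1) (P : Finset α → Prop) : subsetProb V p P ≤ 1 :=
  (Finset.sum_le_sum_of_subset_of_nonneg (Finset.filter_subset _ _) fun A _ _ =>
    subsetWeight_nonneg hp A).trans (sum_subsetWeight V p).le

lemma subsetProb_add_subsetProb_not (V : Finset α) (p : ℝ) (P : Finset α → Prop) :
    subsetProb V p P + subsetProb V p (fun A => ¬ P A) = 1 := by
  rw [← sum_subsetWeight V p, ← Finset.sum_filter_add_sum_filter_not V.powerset P]
  simp only [subsetProb]

lemma subsetProb_le_sum_subsetWeight_mul (hp : p ∈ Set.Icc 0 1) {P : Finset α → Prop}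
    {f : Finset α → ℝ} (hf : ∀ A, 0 ≤ f A) (hPf : ∀ A ⊆ V, P A → 1 ≤ f A) :
    subsetProb V p P ≤ ∑ A ∈ V.powerset, subsetWeight V p A * f A := by
  refine (Finset.sum_le_sum fun A hA => ?_).trans (Finset.sum_le_sum_of_subset_of_nonneg
    (Finset.filter_subset _ _) fun A _ _ => mul_nonneg (subsetWeight_nonneg hp A) (hf A))
  obtain ⟨hAV, hA⟩ := Finset.mem_filter.1 hA
  exact le_mul_of_one_le_right (subsetWeight_nonneg hp A) (hPf A (Finset.mem_powerset.1 hAV) hA)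

lemma subsetProb_le_add_sum (hp : p ∈ Set.Icc 0 1) {β : Type*} {F : Finset β}
    {P Q : Finset α → Prop} {E : β → Finset α → Prop}
    (h : ∀ A ⊆ V, P A → Q A ∨ ∃ Z ∈ F, E Z A) :
    subsetProb V p P ≤ subsetProb V p Q + ∑ Z ∈ F, subsetProb V p (E Z) := by
  have hnonneg : ∀ A, ∀ Z ∈ F, (0 : ℝ) ≤ if E Z A then 1 else 0 := fun A Z _ => by positivity
  calc subsetProb V p P
      ≤ ∑ A ∈ V.powerset, subsetWeight V p A *
          ((if Q A then 1 else 0) + ∑ Z ∈ F, if E Z A then 1 else 0) := by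
        refine subsetProb_le_sum_subsetWeight_mul hp
          (fun A => add_nonneg (by positivity) (Finset.sum_nonneg (hnonneg A))) fun A hA hPA => ?_
        rcases h A hA hPA with hQ | ⟨Z, hZ, hE⟩
        · rw [if_pos hQ]
          exact le_add_of_nonneg_right (Finset.sum_nonneg (hnonneg A))
        · refine le_add_of_nonneg_of_le (by positivity) ?_
          simpa [hE] using Finset.single_le_sum (hnonneg A) hZ
    _ = _ := by
        simp only [mul_add, Finset.mul_sum, Finset.sum_add_distrib, mul_ite, mul_one, mul_zero,
          subsetProb, Finset.sum_filter]
        rw [Finset.sum_comm]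

lemma subsetProb_card_le (hp : p ∈ Set.Icc 0 1) (a : ℝ) :
    subsetProb V p (fun A => A.card ≤ a) ≤ Real.exp (Real.log 2 * a - p * V.card / 2) := by
  calc _ ≤ ∑ A ∈ V.powerset, subsetWeight V p A *
          (Real.exp (Real.log 2 * a) * (1 / 2) ^ A.card) := by
        refine subsetProb_le_sum_subsetWeight_mul hp (fun A => by positivity) fun A _ hA => ?_
        have hlog : (1 / 2 : ℝ) ^ A.card = Real.exp (-(Real.log 2 * A.card)) := by
          rw [Real.exp_neg, mul_comm, Real.exp_nat_mul, Real.exp_log two_pos, one_div, inv_pow]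
        rw [hlog, ← Real.exp_add, Real.one_le_exp_iff, ← sub_eq_add_neg, ← mul_sub]
        exact mul_nonneg (Real.log_pos one_lt_two).le (sub_nonneg.2 hA)
    _ = Real.exp (Real.log 2 * a) * (1 - p / 2) ^ V.card := by
        have hmoment := sum_subsetWeight_mul (Finset.empty_subset V) subset_rfl
          (Finset.disjoint_empty_left _) p (1 / 2)
        rw [Finset.card_empty, pow_zero, one_mul,
          show 1 + (1 / 2 - 1) * p = 1 - p / 2 by ring] at hmoment
        rw [← hmoment, Finset.mul_sum]
        refine Finset.sum_congr rfl fun A hA => ?_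
        rw [if_pos (Finset.empty_subset A), Finset.inter_eq_left.2 (Finset.mem_powerset.1 hA)]
        ring
    _ ≤ Real.exp (Real.log 2 * a) * Real.exp (-(p / 2)) ^ V.card := by
        gcongr
        · linarith [hp.2]
        · exact Real.one_sub_le_exp_neg _
    _ = _ := by
        rw [← Real.exp_nat_mul, ← Real.exp_add]
        ring_nf

lemma subsetProb_subset_and_le_card_inter [DecidableEq α] (hp : p ∈ Set.Icc 0 1) (hS : S ⊆ V)
    (hT : T ⊆ V) (hST : Disjoint S T) (a : ℝ) :
    subsetProb V p (fun A => S ⊆ A ∧ a ≤ (A ∩ T).card) ≤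
      p ^ S.card * Real.exp (p * T.card - Real.log 2 * a) := by
  calc _ ≤ ∑ A ∈ V.powerset, subsetWeight V p A *
          (Real.exp (-(Real.log 2 * a)) * if S ⊆ A then 2 ^ (A ∩ T).card else 0) := by
        refine subsetProb_le_sum_subsetWeight_mul hp (fun A => by positivity) fun A _ hA => ?_
        have hlog : (2 : ℝ) ^ (A ∩ T).card = Real.exp (Real.log 2 * (A ∩ T).card) := by
          rw [mul_comm, Real.exp_nat_mul, Real.exp_log two_pos]
        rw [if_pos hA.1, hlog, ← Real.exp_add, Real.one_le_exp_iff, neg_add_eq_sub, ← mul_sub]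
        exact mul_nonneg (Real.log_pos one_lt_two).le (sub_nonneg.2 hA.2)
    _ = p ^ S.card * (Real.exp (-(Real.log 2 * a)) * (p + 1) ^ T.card) := by
        simp only [mul_left_comm _ (Real.exp _), ← Finset.mul_sum]
        rw [sum_subsetWeight_mul hS hT hST, show 1 + (2 - 1) * p = p + 1 by ring]
    _ ≤ p ^ S.card * (Real.exp (-(Real.log 2 * a)) * Real.exp p ^ T.card) := by
        have := hp.1
        gcongr
        exact Real.add_one_le_exp p
    _ = _ := by
        rw [← Real.exp_nat_mul, ← Real.exp_add]
        ring_nf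

lemma sum_pow_card_le_exp (hp : 0 ≤ p) {b L : ℝ} (hL : 0 ≤ L) {F : Finset (Finset α)}
    (hFV : F ⊆ V.powerset) (hFb : ∀ Z ∈ F, Z.card ≤ b) :
    ∑ Z ∈ F, p ^ Z.card ≤ Real.exp (L * b + Real.exp (-L) * (p * V.card)) := by
  calc ∑ Z ∈ F, p ^ Z.card ≤ ∑ Z ∈ F, Real.exp (L * b) * (Real.exp (-L) * p) ^ Z.card := by
        refine Finset.sum_le_sum fun Z hZ => ?_
        rw [mul_pow, ← Real.exp_nat_mul, ← mul_assoc, ← Real.exp_add]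
        refine le_mul_of_one_le_left (by positivity) (Real.one_le_exp ?_)
        have := mul_le_mul_of_nonneg_left (hFb Z hZ) hL
        linarith
    _ ≤ ∑ Z ∈ V.powerset, Real.exp (L * b) * (Real.exp (-L) * p) ^ Z.card :=
        Finset.sum_le_sum_of_subset_of_nonneg hFV fun _ _ _ => by positivity
    _ = Real.exp (L * b) * (Real.exp (-L) * p + 1) ^ V.card := by
        rw [← Finset.mul_sum, add_comm]
        congr 1
        simpa using (Finset.prod_one_add (f := fun _ : α => Real.exp (-L) * p) V).symm
    _ ≤ Real.exp (L * b) * Real.exp (Real.exp (-L) * p) ^ V.card := by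
        gcongr
        exact Real.add_one_le_exp _
    _ = _ := by
        rw [← Real.exp_nat_mul, ← Real.exp_add]
        ring_nf

end RandomSubset

/-! ### Random subsets are Szemerédi -/

section RandomSzemeredi

variable {k : ℕ} {δ p b : ℝ} {V : Finset ℕ} {R S : Finset ℕ → Finset ℕ}

lemma exists_isProgressionFree_of_not_isSzemeredi {A : Finset ℕ} (hA : ¬ IsSzemeredi δ k A) :
    ∃ B ⊆ A, δ * A.card ≤ B.card ∧ IsProgressionFree k B := by
  simpa only [IsSzemeredi, IsProgressionFree, not_forall, exists_prop] using hA

lemma exists_fingerprint_of_not_isSzemeredi {m : ℝ} (hRS : IsFingerprint R S)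
    (hcont : ∀ I, IsProgressionFree k I →
      I ∩ V ⊆ R I ∪ S I ∧ R I ⊆ V ∧ ((R I).card : ℝ) ≤ m ∧ ((S I).card : ℝ) ≤ b)
    {A : Finset ℕ} (hAV : A ⊆ V) (hA : ¬ IsSzemeredi δ k A) :
    ∃ Z ⊆ A, Z.card ≤ b ∧ R Z ⊆ V ∧ (R Z).card ≤ m ∧ δ * A.card - b ≤ (A ∩ (R Z \ Z)).card := by
  obtain ⟨B, hBA, hBcard, hB⟩ := exists_isProgressionFree_of_not_isSzemeredi hA
  obtain ⟨hcover, hRV, hRcard, hScard⟩ := hcont B hB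
  obtain ⟨hSB, hdet⟩ := hRS B
  have hRSB : R (S B) = R B := (hdet (S B) subset_rfl hSB).1
  refine ⟨S B, hSB.trans hBA, hScard, hRSB ▸ hRV, hRSB ▸ hRcard, ?_⟩
  have hsub : B ⊆ A ∩ (R (S B) \ S B) ∪ S B := by
    intro v hv
    have hmem := hcover (Finset.mem_inter.2 ⟨hv, hAV (hBA hv)⟩)
    have hvA := hBA hv
    simp only [Finset.mem_union, Finset.mem_inter, Finset.mem_sdiff, hRSB] at hmem ⊢
    tauto
  have hcard : (B.card : ℝ) ≤ (A ∩ (R (S B) \ S B)).card + (S B).card := by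
    exact_mod_cast (Finset.card_le_card hsub).trans (Finset.card_union_le _ _)
  linarith

lemma subsetProb_fingerprint_le (hp : p ∈ Set.Icc 0 1) {Z T : Finset ℕ} (hZ : Z ⊆ V) (hT : T ⊆ V)
    (hcard : T.card ≤ δ / 8 * V.card) :
    subsetProb V p (fun A => Z ⊆ A ∧ δ / 4 * (p * V.card) ≤ (A ∩ (T \ Z)).card) ≤
      p ^ Z.card * Real.exp (δ / 8 * (p * V.card) - Real.log 2 * (δ / 4 * (p * V.card))) := by
  have hsdiff : ((T \ Z).card : ℝ) ≤ δ / 8 * V.card :=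
    le_trans (by exact_mod_cast Finset.card_le_card Finset.sdiff_subset) hcard
  have hmean : p * ((T \ Z).card : ℝ) ≤ δ / 8 * (p * V.card) :=
    (mul_le_mul_of_nonneg_left hsdiff hp.1).trans_eq (mul_left_comm _ _ _)
  have hdisj : Disjoint Z (T \ Z) := Finset.disjoint_sdiff
  have hprob := subsetProb_subset_and_le_card_inter hp hZ (Finset.sdiff_subset.trans hT) hdisj
    (δ / 4 * (p * V.card))
  refine hprob.trans (mul_le_mul_of_nonneg_left ?_ (pow_nonneg hp.1 _))
  exact Real.exp_le_exp.2 (sub_le_sub_right hmean _)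

lemma sum_subsetProb_fingerprint_le (hp : p ∈ Set.Icc 0 1) (hδ : 0 < δ)
    (hb : b ≤ δ ^ 2 / 10000 * (p * V.card)) {F : Finset (Finset ℕ)} (hFV : F ⊆ V.powerset)
    (hFb : ∀ Z ∈ F, Z.card ≤ b) (hR : ∀ Z ∈ F, R Z ⊆ V ∧ (R Z).card ≤ δ / 8 * V.card) :
    ∑ Z ∈ F, subsetProb V p (fun A => Z ⊆ A ∧ δ / 4 * (p * V.card) ≤ (A ∩ (R Z \ Z)).card) ≤
      Real.exp (-(δ / 100 * (p * V.card))) := by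
  have hterm := Finset.sum_le_sum fun Z hZ =>
    subsetProb_fingerprint_le hp (Finset.mem_powerset.1 (hFV hZ)) (hR Z hZ).1 (hR Z hZ).2
  have hm0 : 0 ≤ p * (V.card : ℝ) := mul_nonneg hp.1 (Nat.cast_nonneg _)
  set m := p * (V.card : ℝ)
  have hLpos : 0 < 100 / δ := by positivity
  have hexp : Real.exp (-(100 / δ)) * m ≤ δ / 100 * m := by
    gcongr
    rw [Real.exp_neg, ← inv_div 100 δ]
    exact inv_anti₀ hLpos ((le_add_of_nonneg_right zero_le_one).trans (Real.add_one_le_exp _))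
  have hLb : 100 / δ * b ≤ δ / 100 * m :=
    calc 100 / δ * b ≤ 100 / δ * (δ ^ 2 / 10000 * m) := by gcongr
      _ = _ := by field_simp; norm_num
  have hlog : 0.69 * (δ / 4 * m) ≤ Real.log 2 * (δ / 4 * m) := by
    gcongr
    exact le_trans (by norm_num) Real.log_two_gt_d9.le
  have hδm : 0 ≤ δ * m := by positivity
  calc _ ≤ _ := hterm
    _ ≤ Real.exp (100 / δ * b + Real.exp (-(100 / δ)) * m) *
          Real.exp (δ / 8 * m - Real.log 2 * (δ / 4 * m)) := by
        rw [← Finset.sum_mul]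
        gcongr
        exact sum_pow_card_le_exp hp.1 hLpos.le hFV hFb
    _ ≤ _ := by
        rw [← Real.exp_add]
        gcongr
        linarith

theorem one_sub_le_subsetProb_isSzemeredi (hp : p ∈ Set.Icc 0 1) (hδ : 0 < δ) (hδ1 : δ ≤ 1)
    (hcont : HasContainers (IsProgressionFree k) V (δ / 8 * V.card) b)
    (hb : b ≤ δ ^ 2 / 10000 * (p * V.card)) :
    1 - (Real.exp (-(1 / 10 * (p * V.card))) + Real.exp (-(δ / 100 * (p * V.card)))) ≤
      subsetProb V p (IsSzemeredi δ k) := by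
  obtain ⟨R, S, hRS, hcont⟩ := hcont
  set m := p * V.card
  have hm0 : 0 ≤ m := mul_nonneg hp.1 (Nat.cast_nonneg _)
  set F := {Z ∈ V.powerset | Z.card ≤ b ∧ R Z ⊆ V ∧ (R Z).card ≤ δ / 8 * V.card}
  have hbad : ∀ A ⊆ V, ¬ IsSzemeredi δ k A → A.card ≤ m / 2 ∨
      ∃ Z ∈ F, Z ⊆ A ∧ δ / 4 * m ≤ (A ∩ (R Z \ Z)).card := by
    intro A hAV hA
    refine or_iff_not_imp_left.2 fun hlarge => ?_
    obtain ⟨Z, hZA, hZb, hRV, hRcard, hlarge'⟩ :=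
      exists_fingerprint_of_not_isSzemeredi hRS hcont hAV hA
    refine ⟨Z, Finset.mem_filter.2 ⟨Finset.mem_powerset.2 (hZA.trans hAV), hZb, hRV, hRcard⟩, hZA,
      le_trans ?_ hlarge'⟩
    have hb4 : δ ^ 2 / 10000 * m ≤ δ / 4 * m := by gcongr ?_ * m; nlinarith
    have := mul_lt_mul_of_pos_left (not_le.1 hlarge) hδ
    linarith
  have hsmall : subsetProb V p (fun A => A.card ≤ m / 2) ≤ Real.exp (-(1 / 10 * m)) := by
    refine (subsetProb_card_le hp _).trans (Real.exp_le_exp.2 ?_)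
    have := mul_le_mul_of_nonneg_right Real.log_two_lt_d9.le (by positivity : 0 ≤ m / 2)
    linarith
  have hcaptured := sum_subsetProb_fingerprint_le (R := R) (F := F) hp hδ hb
    (Finset.filter_subset _ _) (fun Z hZ => (Finset.mem_filter.1 hZ).2.1)
    fun Z hZ => (Finset.mem_filter.1 hZ).2.2
  have hunion := subsetProb_le_add_sum hp hbad
  have htotal := subsetProb_add_subsetProb_not V p (IsSzemeredi δ k)
  linarith

lemma rpow_neg_inv_pow_mul_self {x : ℝ} (hx : 0 < x) {m : ℕ} (hm : m ≠ 0) :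
    (x ^ (-1 / (m : ℝ))) ^ m * x = 1 := by
  rw [← Real.rpow_natCast, ← Real.rpow_mul hx.le, div_mul_cancel₀ _ (by positivity),
    Real.rpow_neg_one, inv_mul_cancel₀ hx.ne']

theorem exists_eventually_one_sub_le_randomSubsetProb (hδ : 0 < δ) (hδ1 : δ ≤ 1) (hk : 2 ≤ k) :
    ∃ C : ℝ, 0 < C ∧ ∀ᶠ n : ℕ in Filter.atTop, ∀ p ∈ Set.Icc (0 : ℝ) 1,
      C * (n : ℝ) ^ (-1 / ((k : ℝ) - 1)) ≤ p →
      1 - (Real.exp (-(1 / 10 * (p * n))) + Real.exp (-(δ / 100 * (p * n)))) ≤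
        randomSubsetProb n p (IsSzemeredi δ k) := by
  obtain ⟨M, hM, hcont⟩ := exists_hasContainers_isProgressionFree hk (δ := δ / 8) (by positivity)
  refine ⟨M / (δ ^ 2 / 10000), by positivity, ?_⟩
  filter_upwards [hcont, Filter.eventually_ge_atTop 1] with n hcont hn p hp hCp
  have hn1 : (1 : ℝ) ≤ n := by exact_mod_cast hn
  rw [← Nat.cast_pred (by omega)] at hCp
  have hroot := hcont ((n : ℝ) ^ (-1 / ((k - 1 : ℕ) : ℝ))) (by positivity)
    (Real.rpow_le_one_of_one_le_of_nonpos hn1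
      (div_nonpos_of_nonpos_of_nonneg (by norm_num) (Nat.cast_nonneg _)))
    (rpow_neg_inv_pow_mul_self (by positivity) (by omega))
  rw [div_mul_eq_mul_div, div_le_iff₀ (by positivity)] at hCp
  have hcard : ((Finset.Icc 1 n).card : ℝ) = n := by simp
  rw [randomSubsetProb_eq_subsetProb, ← hcard]
  refine one_sub_le_subsetProb_isSzemeredi hp hδ hδ1 (by rwa [hcard]) ?_
  rw [hcard, ← mul_assoc, ← mul_assoc, mul_comm (δ ^ 2 / 10000)]
  gcongr

lemma tendsto_mul_natCast_atTop {C e : ℝ} (hC : 0 < C) (he : -1 < e) {p : ℕ → ℝ}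
    (hp : ∀ᶠ n : ℕ in Filter.atTop, C * (n : ℝ) ^ e ≤ p n) :
    Filter.Tendsto (fun n : ℕ => p n * n) Filter.atTop Filter.atTop := by
  have hpow : Filter.Tendsto (fun n : ℕ => C * (n : ℝ) ^ (e + 1)) Filter.atTop Filter.atTop :=
    ((tendsto_rpow_atTop (by linarith)).comp tendsto_natCast_atTop_atTop).const_mul_atTop hC
  refine Filter.tendsto_atTop_mono' _ ?_ hpow
  filter_upwards [hp, Filter.eventually_ne_atTop 0] with n hpn hn
  rw [Real.rpow_add_one (Nat.cast_ne_zero.2 hn), ← mul_assoc]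
  gcongr

lemma tendsto_one_sub_exp_add_exp {ι : Type*} {l : Filter ι} {m : ι → ℝ} {a b : ℝ} (ha : 0 < a)
    (hb : 0 < b) (hm : Filter.Tendsto m l Filter.atTop) :
    Filter.Tendsto (fun i => 1 - (Real.exp (-(a * m i)) + Real.exp (-(b * m i)))) l (nhds 1) := by
  have hexp : ∀ c : ℝ, 0 < c → Filter.Tendsto (fun i => Real.exp (-(c * m i))) l (nhds 0) :=
    fun c hc => Real.tendsto_exp_neg_atTop_nhds_zero.comp (hm.const_mul_atTop hc)
  simpa using ((hexp a ha).add (hexp b hb)).const_sub 1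

end RandomSzemeredi

end SparseSzemeredi

open SparseSzemeredi in
/-- Corollary 1.2: the sparse random analogue of Szemerédi's theorem. -/
theorem szemeredi_random_sparse (δ : ℝ) (hδ0 : 0 < δ) (hδ1 : δ < 1) (k : ℕ) (hk : 3 ≤ k) :
    ∃ C : ℝ, ∀ p : ℕ → ℝ, (∀ n, p n ∈ Set.Icc (0 : ℝ) 1) →
      (∀ᶠ n : ℕ in Filter.atTop, C * (n : ℝ) ^ (-(1 : ℝ) / ((k : ℝ) - 1)) ≤ p n) →
      Filter.Tendsto (fun n => randomSubsetProb n (p n) (IsSzemeredi δ k))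
        Filter.atTop (nhds 1) := by
  obtain ⟨C, hC, hprob⟩ :=
    exists_eventually_one_sub_le_randomSubsetProb hδ0 hδ1.le (k := k) (by omega)
  refine ⟨C, fun p hp hCp => ?_⟩
  have hexponent : -1 < -1 / ((k : ℝ) - 1) := by
    have : (3 : ℝ) ≤ k := by exact_mod_cast hk
    rw [lt_div_iff₀ (by linarith)]
    linarith
  have hmean := tendsto_mul_natCast_atTop hC hexponent hCp
  refine tendsto_of_tendsto_of_tendsto_of_le_of_le'
    (tendsto_one_sub_exp_add_exp (a := 1 / 10) (b := δ / 100) (by positivity) (by positivity) hmean)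
    tendsto_const_nhds ?_ ?_
  · filter_upwards [hprob, hCp] with n hprob hCp using hprob (p n) (hp n) hCp
  · refine Filter.Eventually.of_forall fun n => ?_
    rw [randomSubsetProb_eq_subsetProb]
    exact subsetProb_le_one (hp n) _
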